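/- arXiv:2401.00542 — 2 statements merged into one kernel-verified Lean document; each statement's English description precedes it below -/
import Mathlib

section
/- For H proper, radially 1-homogeneous and lsc, the function co*H defined pointwise by taking the lsc convex envelope of the radial section r ↦ H([x₁,r₁],[x₂,r₂]) (for each fixed (x₁,x₂)) coincides with the global lsc-then-convex envelope cl co H on the product cone, and both equal sup{φ₁(x₁)r₁ + φ₂(x₂)r₂ : (φ₁,φ₂) ∈ Φ_H}; moreover U_H = U_{cl co H} and cl co F_H = cl co F_{cl co H}. -/
open MeasureTheory Topology Filter Set
open scoped NNReal ENNReal BoundedContinuousFunction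

noncomputable section

namespace UOT

variable (X : Type*)

/-- The equivalence relation on `X × ℝ≥0` identifying all points with radius `0`. -/
def coneSetoid : Setoid (X × ℝ≥0) where
  r p q := p = q ∨ (p.2 = 0 ∧ q.2 = 0)
  iseqv := by
    refine ⟨fun p => Or.inl rfl, ?_, ?_⟩
    · rintro p q (rfl | h)
      · exact Or.inl rfl
      · exact Or.inr ⟨h.2, h.1⟩
    · rintro p q r hpq hqr
      rcases hpq with rfl | h
      · exact hqr
      · rcases hqr with rfl | h'
        · exact Or.inr h
        · exact Or.inr ⟨h.1, h'.2⟩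

/-- The geometric cone over `X`. -/
def Cone := Quotient (coneSetoid X)

/-- The canonical map sending `(x, r)` to the point `[x, r]` of the cone. -/
def Cone.mk (x : X) (r : ℝ≥0) : Cone X := Quotient.mk (coneSetoid X) (x, r)

/-- The vertex `o` of the cone. -/
def Cone.vertex [Nonempty X] : Cone X := Cone.mk X (Classical.arbitrary X) 0

/-- The radial coordinate `r` of a point of the cone. -/
def Cone.radius : Cone X → ℝ≥0 :=
  Quotient.lift (fun p => p.2) (by
    rintro p q (rfl | ⟨h1, h2⟩)
    · rfl
    · simp [h1, h2])

/-- The base point `x` of a point of the cone (an arbitrary point of `X` at the vertex). -/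
def Cone.basePt [Nonempty X] : Cone X → X :=
  Quotient.lift (fun p => if p.2 = 0 then Classical.arbitrary X else p.1) (by
    rintro p q (rfl | ⟨h1, h2⟩)
    · rfl
    · simp [h1, h2])

/-- Radial rescaling `λ • [x, r] = [x, λ * r]` on the cone. -/
def Cone.smul (c : ℝ≥0) : Cone X → Cone X :=
  Quotient.lift (fun p => Cone.mk X p.1 (c * p.2)) (by
    rintro p q (rfl | ⟨h1, h2⟩)
    · rfl
    · apply Quotient.sound
      exact Or.inr ⟨by simp [h1], by simp [h2]⟩)

variable [TopologicalSpace X]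

/-- The cone topology: a set is open iff its preimage in `X × ℝ≥0` is open and, when it
contains the vertex, it contains a whole strip `{[x, r] : r < ε}`. -/
instance : TopologicalSpace (Cone X) where
  IsOpen U := IsOpen ((fun p : X × ℝ≥0 => Cone.mk X p.1 p.2) ⁻¹' U) ∧
      ∀ x : X, Cone.mk X x 0 ∈ U →
        ∃ ε : ℝ≥0, 0 < ε ∧ ∀ (y : X) (r : ℝ≥0), r < ε → Cone.mk X y r ∈ U
  isOpen_univ := ⟨isOpen_univ, fun _ _ => ⟨1, one_pos, fun _ _ _ => mem_univ _⟩⟩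
  isOpen_inter := by
    rintro s t ⟨hs1, hs2⟩ ⟨ht1, ht2⟩
    refine ⟨hs1.inter ht1, fun x hx => ?_⟩
    obtain ⟨ε₁, hε₁, h₁⟩ := hs2 x hx.1
    obtain ⟨ε₂, hε₂, h₂⟩ := ht2 x hx.2
    exact ⟨min ε₁ ε₂, lt_min hε₁ hε₂, fun y r hr =>
      ⟨h₁ y r (hr.trans_le (min_le_left _ _)), h₂ y r (hr.trans_le (min_le_right _ _))⟩⟩
  isOpen_sUnion := by
    intro S hS
    constructor
    · rw [Set.preimage_sUnion]
      exact isOpen_biUnion fun t ht => (hS t ht).1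
    · intro x hx
      obtain ⟨t, ht, hxt⟩ := hx
      obtain ⟨ε, hε, h⟩ := (hS t ht).2 x hxt
      exact ⟨ε, hε, fun y r hr => ⟨t, ht, h y r hr⟩⟩

instance : MeasurableSpace (Cone X) := borel (Cone X)

instance : BorelSpace (Cone X) := ⟨rfl⟩

/-- On a product of cones we use the Borel σ-algebra of the product topology. -/
instance (priority := 2000) prodConeMeasurableSpace (X₁ X₂ : Type*) [TopologicalSpace X₁]
    [TopologicalSpace X₂] : MeasurableSpace (Cone X₁ × Cone X₂) :=
  borel (Cone X₁ × Cone X₂)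

instance (priority := 2000) prodConeBorelSpace (X₁ X₂ : Type*) [TopologicalSpace X₁]
    [TopologicalSpace X₂] : BorelSpace (Cone X₁ × Cone X₂) := ⟨rfl⟩

variable {X}

/-- The scaled Dirac measure `r • δ_x` as a finite measure. -/
def diracFM {Y : Type*} [MeasurableSpace Y] (x : Y) : FiniteMeasure Y :=
  ⟨Measure.dirac x, inferInstance⟩

/-- The canonical map `[x, r] ↦ r • δ_x` from the cone to finite measures. -/
def coneToFM (X : Type*) [TopologicalSpace X] [MeasurableSpace X] :
    Cone X → FiniteMeasure X :=
  Quotient.lift (fun p : X × ℝ≥0 => p.2 • diracFM p.1) (by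
    rintro p q (rfl | ⟨h1, h2⟩)
    · rfl
    · simp [h1, h2])

/-- A finite measure is discrete if it is a finite nonnegative combination of Dirac masses. -/
def IsDiscreteFM {Y : Type*} [MeasurableSpace Y] (μ : FiniteMeasure Y) : Prop :=
  ∃ (n : ℕ) (c : Fin n → ℝ≥0) (x : Fin n → Y), μ = ∑ i, c i • diracFM (x i)

section Product

variable {X₁ X₂ : Type*} [TopologicalSpace X₁] [TopologicalSpace X₂]

/-- Radial `1`-homogeneity of a cost function on the product cone. -/
def RadiallyHomogeneous (H : Cone X₁ × Cone X₂ → ℝ≥0∞) : Prop :=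
  ∀ (x₁ : X₁) (x₂ : X₂) (r₁ r₂ lam : ℝ≥0), 0 < lam →
    H (Cone.mk X₁ x₁ (lam * r₁), Cone.mk X₂ x₂ (lam * r₂)) =
      (lam : ℝ≥0∞) * H (Cone.mk X₁ x₁ r₁, Cone.mk X₂ x₂ r₂)

/-- Radial convexity of a cost function on the product cone: every radial section is convex. -/
def RadiallyConvex (H : Cone X₁ × Cone X₂ → ℝ≥0∞) : Prop :=
  ∀ (x₁ : X₁) (x₂ : X₂) (a₁ a₂ b₁ b₂ t : ℝ≥0), t ≤ 1 →
    H (Cone.mk X₁ x₁ (t * a₁ + (1 - t) * b₁), Cone.mk X₂ x₂ (t * a₂ + (1 - t) * b₂)) ≤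
      (t : ℝ≥0∞) * H (Cone.mk X₁ x₁ a₁, Cone.mk X₂ x₂ a₂) +
        ((1 - t : ℝ≥0) : ℝ≥0∞) * H (Cone.mk X₁ x₁ b₁, Cone.mk X₂ x₂ b₂)

/-- Properness: `H` is not identically `+∞`. -/
def ProperCost (H : Cone X₁ × Cone X₂ → ℝ≥0∞) : Prop := ∃ y, H y ≠ ⊤

variable [MeasurableSpace X₁] [MeasurableSpace X₂]

/-- First `p`-homogeneous marginal `h₁^p(α) = (x₁)_♯ (r₁^p · α)`. -/
def homMarginalFst [Nonempty X₁] (p : ℝ) (α : Measure (Cone X₁ × Cone X₂)) : Measure X₁ :=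
  Measure.map (fun y : Cone X₁ × Cone X₂ => Cone.basePt X₁ y.1)
    (α.withDensity fun y => (Cone.radius X₁ y.1 : ℝ≥0∞) ^ p)

/-- Second `p`-homogeneous marginal `h₂^p(α) = (x₂)_♯ (r₂^p · α)`. -/
def homMarginalSnd [Nonempty X₂] (p : ℝ) (α : Measure (Cone X₁ × Cone X₂)) : Measure X₂ :=
  Measure.map (fun y : Cone X₁ × Cone X₂ => Cone.basePt X₂ y.2)
    (α.withDensity fun y => (Cone.radius X₂ y.2 : ℝ≥0∞) ^ p)

variable [Nonempty X₁] [Nonempty X₂]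

/-- `α ∈ H^p(μ₁, μ₂)`: a (finite Radon) homogeneous coupling with finite `p`-th radial
moments and `p`-homogeneous marginals `μ₁, μ₂`. -/
def IsHomCoupling (p : ℝ) (α : Measure (Cone X₁ × Cone X₂))
    (μ₁ : Measure X₁) (μ₂ : Measure X₂) : Prop :=
  IsFiniteMeasure α ∧
    (∫⁻ y, ((Cone.radius X₁ y.1 : ℝ≥0∞) ^ p + (Cone.radius X₂ y.2 : ℝ≥0∞) ^ p) ∂α) ≠ ⊤ ∧
    homMarginalFst p α = μ₁ ∧ homMarginalSnd p α = μ₂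

/-- The unbalanced optimal transport cost `U_H`. -/
def UH (H : Cone X₁ × Cone X₂ → ℝ≥0∞) (μ₁ : Measure X₁) (μ₂ : Measure X₂) : ℝ≥0∞ :=
  ⨅ (α : Measure (Cone X₁ × Cone X₂)) (_ : IsHomCoupling 1 α μ₁ μ₂), ∫⁻ y, H y ∂α

/-- The truncated product cone `C_R[X₁, X₂]`: both radii at most `R`. -/
def prodConeTrunc (R : ℝ≥0) : Set (Cone X₁ × Cone X₂) :=
  {y | Cone.radius X₁ y.1 ≤ R ∧ Cone.radius X₂ y.2 ≤ R}

/-- Membership of a pair of bounded continuous potentials in the dual constraint set `Φ_H`. -/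
def InPhi (H : Cone X₁ × Cone X₂ → ℝ≥0∞) (φ₁ : X₁ →ᵇ ℝ) (φ₂ : X₂ →ᵇ ℝ) : Prop :=
  ∀ (x₁ : X₁) (x₂ : X₂) (r₁ r₂ : ℝ≥0),
    ENNReal.ofReal (φ₁ x₁ * r₁ + φ₂ x₂ * r₂) ≤ H (Cone.mk X₁ x₁ r₁, Cone.mk X₂ x₂ r₂)

/-- `H`-cyclical monotonicity of a subset of the product cone. -/
def HCyclicallyMonotone (H : Cone X₁ × Cone X₂ → ℝ≥0∞)
    (Γ : Set (Cone X₁ × Cone X₂)) : Prop :=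
  ∀ (N : ℕ) (y : Fin N → Cone X₁ × Cone X₂), (∀ i, y i ∈ Γ) → ∀ σ : Equiv.Perm (Fin N),
    ∑ i, H (y i) ≤ ∑ i, H ((y i).1, (y (σ i)).2)

/-- A radial convex cone in the product cone. -/
def IsRadialConvexCone (Γ : Set (Cone X₁ × Cone X₂)) : Prop :=
  ∀ (x₁ : X₁) (x₂ : X₂) (a₁ a₂ b₁ b₂ lam mu : ℝ≥0),
    (Cone.mk X₁ x₁ a₁, Cone.mk X₂ x₂ a₂) ∈ Γ → (Cone.mk X₁ x₁ b₁, Cone.mk X₂ x₂ b₂) ∈ Γ →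
      (Cone.mk X₁ x₁ (lam * a₁ + mu * b₁), Cone.mk X₂ x₂ (lam * a₂ + mu * b₂)) ∈ Γ

end Product

/-- Convexity (with scalars in `ℝ≥0`) of an `ℝ≥0∞`-valued function on a module. -/
def ConvexENN {E : Type*} [AddCommMonoid E] [SMul ℝ≥0 E] (f : E → ℝ≥0∞) : Prop :=
  ∀ (a b : E) (t : ℝ≥0), t ≤ 1 →
    f (t • a + (1 - t) • b) ≤ (t : ℝ≥0∞) * f a + ((1 - t : ℝ≥0) : ℝ≥0∞) * f b

/-- The lower semicontinuous convex envelope: the largest lsc convex function below `F`. -/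
def lscConvexHull {E : Type*} [TopologicalSpace E] [AddCommMonoid E] [SMul ℝ≥0 E]
    (F : E → ℝ≥0∞) : E → ℝ≥0∞ :=
  fun e => ⨆ (g : E → ℝ≥0∞) (_ : LowerSemicontinuous g ∧ ConvexENN g ∧ g ≤ F), g e

/-- The convex envelope: the largest convex function below `F`. -/
def convexHullFn {E : Type*} [AddCommMonoid E] [SMul ℝ≥0 E] (F : E → ℝ≥0∞) : E → ℝ≥0∞ :=
  fun e => ⨆ (g : E → ℝ≥0∞) (_ : ConvexENN g ∧ g ≤ F), g e

/-- The lower semicontinuous envelope: the largest lsc function below `F`. -/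
def lscHull {E : Type*} [TopologicalSpace E] (F : E → ℝ≥0∞) : E → ℝ≥0∞ :=
  fun e => ⨆ (g : E → ℝ≥0∞) (_ : LowerSemicontinuous g ∧ g ≤ F), g e

end UOT
namespace UOT

variable {X₁ X₂ : Type*} [TopologicalSpace X₁] [TopologicalSpace X₂]

/-- The radial section of `H` at fixed base points `(x₁, x₂)`. -/
def secF (H : Cone X₁ × Cone X₂ → ℝ≥0∞) (x₁ : X₁) (x₂ : X₂) : ℝ≥0 × ℝ≥0 → ℝ≥0∞ :=
  fun r => H (Cone.mk X₁ x₁ r.1, Cone.mk X₂ x₂ r.2)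

/-- The radial convexification `co H` of `H`: the convex envelope of each radial section. -/
def radialConvexification [Nonempty X₁] [Nonempty X₂]
    (H : Cone X₁ × Cone X₂ → ℝ≥0∞) : Cone X₁ × Cone X₂ → ℝ≥0∞ :=
  fun y => convexHullFn (secF H (Cone.basePt X₁ y.1) (Cone.basePt X₂ y.2))
    (Cone.radius X₁ y.1, Cone.radius X₂ y.2)

/-- The singular cost `F_H` on pairs of weighted Dirac masses. -/
def singCost [MeasurableSpace X₁] [MeasurableSpace X₂]
    (H : Cone X₁ × Cone X₂ → ℝ≥0∞) :
    FiniteMeasure X₁ × FiniteMeasure X₂ → ℝ≥0∞ :=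
  fun q => ⨅ (y : Cone X₁ × Cone X₂)
    (_ : coneToFM X₁ y.1 = q.1 ∧ coneToFM X₂ y.2 = q.2), H y

/-!
By homogeneity, a section `h` of `H` has convex envelope `r ↦ inf {h a + h b | a + b = r}`: by
Carathéodory's theorem in the quadrant, two vectors suffice. The decompositions `r = a + b` are
parametrized by the fractions `θ ∈ [0, 1]²` of the two radii given to `a`, so `co H y` is the
minimum over a compact set of a cost that is lsc jointly in `y` and `θ`. Hence `co H` is already
lsc, and its sections are the lsc convex envelopes of the sections of `H`. The minimizing `θ` can
moreover be chosen measurably; splitting every point of a coupling accordingly does not change the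
homogeneous marginals, and the `H`-cost of the new coupling is the `co H`-cost of the old one.

For the dual formula, Hahn–Banach gives linear minorants of the sections of `co H`. Up to an error
`ε`, a minorant at `(x₁, x₂)` is still a minorant at nearby points, and it is extended to potentials
equal to a large negative constant away from `x₁` and `x₂`. If only one of the two points is far,
this constant suffices because every neighbourhood of the vertex contains a strip `{[x, r] : r < δ}`
over the whole base.
-/

section ConvexEnvelope

variable {E : Type*} [AddCommMonoid E] {f g F : E → ℝ≥0∞}

section SMul

variable [SMul ℝ≥0 E]

lemma convexHullFn_le : convexHullFn F ≤ F := fun e => iSup₂_le fun _ hg => hg.2 e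

lemma ConvexENN.le_convexHullFn (hg : ConvexENN g) (hgF : g ≤ F) : g ≤ convexHullFn F :=
  fun _ => le_iSup₂_of_le g ⟨hg, hgF⟩ le_rfl

lemma convexENN_convexHullFn : ConvexENN (convexHullFn F) := fun a b t ht =>
  iSup₂_le fun g hg => (hg.1 a b t ht).trans <| by
    gcongr <;> exact hg.1.le_convexHullFn hg.2 _

lemma lscConvexHull_eq_convexHullFn [TopologicalSpace E]
    (hF : LowerSemicontinuous (convexHullFn F)) : lscConvexHull F = convexHullFn F :=
  le_antisymm (fun e => iSup₂_le fun _ hg => hg.2.1.le_convexHullFn hg.2.2 e)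
    fun _ => le_iSup₂_of_le _ ⟨hF, convexENN_convexHullFn, convexHullFn_le⟩ le_rfl

end SMul

lemma lscHull_eq_self {Y : Type*} [TopologicalSpace Y] {F : Y → ℝ≥0∞}
    (hF : LowerSemicontinuous F) : lscHull F = F :=
  le_antisymm (fun y => iSup₂_le fun _ hg => hg.2 y) fun _ => le_iSup₂_of_le F ⟨hF, le_rfl⟩ le_rfl

end ConvexEnvelope

section PosHomogeneous

variable {E : Type*} [AddCommMonoid E] {f g h k : E → ℝ≥0∞}

/-- The infimal convolution: the least cost `f a + g b` over all splittings `r = a + b`. -/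
def infConv (f g : E → ℝ≥0∞) (r : E) : ℝ≥0∞ := ⨅ (a) (b) (_ : a + b = r), f a + g b

lemma infConv_add_le (a b : E) : infConv f g (a + b) ≤ f a + g b :=
  iInf₂_le_of_le a b (iInf_le _ rfl)

lemma le_infConv {r : E} {x : ℝ≥0∞} (hx : ∀ a b, a + b = r → x ≤ f a + g b) : x ≤ infConv f g r :=
  le_iInf₂ fun a b => le_iInf (hx a b)

variable [Module ℝ≥0 E]

/-- Positive `1`-homogeneity of a cost on a cone. The scalar `0` is included, which forces
`h 0 = 0`. -/
def IsPosHomogeneous (h : E → ℝ≥0∞) : Prop := ∀ (c : ℝ≥0) (v : E), h (c • v) = c * h v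

/-- Sublinear functions: the functions whose epigraph is a convex cone. -/
structure IsSublinear (k : E → ℝ≥0∞) : Prop where
  add_le : ∀ a b, k (a + b) ≤ k a + k b
  smul_le : ∀ (c : ℝ≥0) v, k (c • v) ≤ c * k v

lemma IsPosHomogeneous.map_zero (hh : IsPosHomogeneous h) : h 0 = 0 := by
  simpa using hh 0 0

lemma IsSublinear.map_zero (hk : IsSublinear k) : k 0 = 0 := by
  simpa using hk.smul_le 0 0

lemma IsSublinear.convexENN (hk : IsSublinear k) : ConvexENN k := fun _ _ _ _ =>
  (hk.add_le _ _).trans (add_le_add (hk.smul_le _ _) (hk.smul_le _ _))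

lemma ConvexENN.map_add_le (hg : ConvexENN g) (hh : IsPosHomogeneous h) (hgh : g ≤ h) (a b : E) :
    g (a + b) ≤ h a + h b := by
  have half_add_half : (2⁻¹ : ℝ≥0) + 2⁻¹ = 1 := by rw [← two_mul]; exact mul_inv_cancel₀ two_ne_zero
  have one_sub_half : (1 : ℝ≥0) - 2⁻¹ = 2⁻¹ := tsub_eq_of_eq_add half_add_half.symm
  have half_le_one : (2⁻¹ : ℝ≥0) ≤ 1 := half_add_half ▸ le_self_add
  have half_smul (v : E) : (2⁻¹ : ℝ≥0) • (2 : ℝ≥0) • v = v := inv_smul_smul₀ two_ne_zero v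
  have half_mul (v : E) : ((2⁻¹ : ℝ≥0) : ℝ≥0∞) * g ((2 : ℝ≥0) • v) ≤ h v :=
    calc ((2⁻¹ : ℝ≥0) : ℝ≥0∞) * g ((2 : ℝ≥0) • v)
        ≤ ((2⁻¹ : ℝ≥0) : ℝ≥0∞) * h ((2 : ℝ≥0) • v) := by gcongr; exact hgh _
      _ = h v := by rw [← hh, half_smul]
  have hconv := hg ((2 : ℝ≥0) • a) ((2 : ℝ≥0) • b) 2⁻¹ half_le_one
  rw [one_sub_half, half_smul, half_smul] at hconv
  exact hconv.trans (add_le_add (half_mul a) (half_mul b))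

lemma infConv_self_smul_le (hh : IsPosHomogeneous h) (c : ℝ≥0) (r : E) :
    infConv h h (c • r) ≤ c * infConv h h r := by
  rcases eq_or_ne c 0 with rfl | hc
  · simpa [hh.map_zero] using infConv_add_le (f := h) (g := h) 0 0
  · have hc' : (c : ℝ≥0∞) ≠ 0 := ENNReal.coe_ne_zero.2 hc
    simp only [infConv, ENNReal.mul_iInf_of_ne hc' ENNReal.coe_ne_top]
    change infConv h h (c • r) ≤ _
    refine le_iInf₂ fun a b => le_iInf fun hab => ?_
    rw [← hab, smul_add, mul_add, ← hh, ← hh]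
    exact infConv_add_le _ _

lemma convexHullFn_le_infConv_self (hh : IsPosHomogeneous h) : convexHullFn h ≤ infConv h h :=
  fun _ => le_infConv fun a b hab => hab ▸ convexENN_convexHullFn.map_add_le hh convexHullFn_le a b

lemma infConv_self_le (hh : IsPosHomogeneous h) : infConv h h ≤ h := fun r => by
  simpa [hh.map_zero] using infConv_add_le (f := h) (g := h) r 0

end PosHomogeneous

section Caratheodory

/-- Conic Carathéodory with a cost: moving the weights along a linear relation in the direction
that does not increase the cost makes one of them vanish. -/
lemma exists_nnreal_smul_sum_eq {ι V : Type*} [Fintype ι] [AddCommGroup V] [Module ℝ V]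
    {v : ι → V} (hv : ¬ LinearIndependent ℝ v) {l : V →ₗ[ℝ] ℝ} (hl : ∀ i, 0 < l (v i))
    (t : ι → ℝ) :
    ∃ c : ι → ℝ≥0, (∃ i, c i = 0) ∧ ∑ i, c i • v i = ∑ i, v i ∧ ∑ i, c i * t i ≤ ∑ i, t i := by
  obtain ⟨w, hw, hw0, hwt⟩ : ∃ w : ι → ℝ, ∑ i, w i • v i = 0 ∧ w ≠ 0 ∧ ∑ i, w i * t i ≤ 0 := by
    obtain ⟨w, hw, i, hi⟩ := Fintype.not_linearIndependent_iff.1 hv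
    have hw0 : w ≠ 0 := fun h => hi (congrFun h i)
    rcases le_total (∑ i, w i * t i) 0 with hwt | hwt
    · exact ⟨w, hw, hw0, hwt⟩
    · exact ⟨-w, by simp [hw], neg_ne_zero.2 hw0, by simpa using hwt⟩
  obtain ⟨j, hj⟩ : ∃ j, w j < 0 := by
    by_contra! hnonneg
    have hsum : ∑ i, w i * l (v i) = 0 := by simpa using congrArg l hw
    have hzero := (Fintype.sum_eq_zero_iff_of_nonneg fun i =>
      mul_nonneg (hnonneg i) (hl i).le).1 hsum
    exact hw0 (funext fun i => (mul_eq_zero.1 (congrFun hzero i)).resolve_right (hl i).ne')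
  obtain ⟨m, -, hm⟩ := Finset.exists_min_image Finset.univ w ⟨j, Finset.mem_univ j⟩
  have hm0 : w m < 0 := (hm j (Finset.mem_univ j)).trans_lt hj
  have hc (i : ι) : 0 ≤ 1 - w i / w m :=
    sub_nonneg.2 ((div_le_one_of_neg hm0).2 (hm i (Finset.mem_univ i)))
  refine ⟨fun i => ⟨1 - w i / w m, hc i⟩, ⟨m, ?_⟩, ?_, ?_⟩
  · exact NNReal.eq (sub_eq_zero.2 (div_self hm0.ne).symm)
  · calc ∑ i, (1 - w i / w m) • v i = ∑ i, v i - (w m)⁻¹ • ∑ i, w i • v i := by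
          simp only [sub_smul, one_smul, Finset.sum_sub_distrib, Finset.smul_sum, smul_smul,
            div_eq_inv_mul]
      _ = ∑ i, v i := by rw [hw, smul_zero, sub_zero]
  · calc ∑ i, (1 - w i / w m) * t i = ∑ i, t i - (w m)⁻¹ * ∑ i, w i * t i := by
          simp only [sub_mul, one_mul, Finset.sum_sub_distrib, Finset.mul_sum, div_eq_inv_mul,
            mul_assoc]
      _ ≤ ∑ i, t i := sub_le_self _ (mul_nonneg_of_nonpos_of_nonpos (inv_nonpos.2 hm0.le) hwt)

variable {h : ℝ≥0 × ℝ≥0 → ℝ≥0∞}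

lemma exists_smul_sum_eq_of_fin_three (v : Fin 3 → ℝ≥0 × ℝ≥0) (t : Fin 3 → ℝ≥0) :
    ∃ c : Fin 3 → ℝ≥0, (∃ i, c i = 0) ∧ ∑ i, c i • v i = ∑ i, v i ∧ ∑ i, c i * t i ≤ ∑ i, t i := by
  by_cases hv : ∃ i, v i = 0
  · obtain ⟨i, hi⟩ := hv
    refine ⟨Function.update 1 i 0, ⟨i, by simp⟩, ?_, ?_⟩
    · simp [Fin.sum_univ_succAbove _ i, hi]
    · simp [Fin.sum_univ_succAbove _ i]
  push Not at hv
  let e : Fin 3 → ℝ × ℝ := fun i => ((v i).1, (v i).2)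
  have he : ¬ LinearIndependent ℝ e := fun hli => by
    simpa using hli.fintype_card_le_finrank
  have hpos (i : Fin 3) : 0 < (LinearMap.fst ℝ ℝ ℝ + LinearMap.snd ℝ ℝ ℝ) (e i) := by
    have hne : (v i).1 + (v i).2 ≠ 0 := fun h0 => hv i (by simpa [Prod.ext_iff] using h0)
    exact_mod_cast pos_iff_ne_zero.2 hne
  obtain ⟨c, hc0, hcv, hct⟩ := exists_nnreal_smul_sum_eq he hpos fun i => (t i : ℝ)
  refine ⟨c, hc0, ?_, by exact_mod_cast hct⟩
  have h₁ := congrArg Prod.fst hcv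
  have h₂ := congrArg Prod.snd hcv
  simp only [Prod.fst_sum, Prod.snd_sum, Prod.smul_fst, Prod.smul_snd, NNReal.smul_def, smul_eq_mul,
    e] at h₁ h₂
  ext
  · simpa [Prod.fst_sum] using h₁
  · simpa [Prod.snd_sum] using h₂

lemma exists_add_eq_add_add (hh : IsPosHomogeneous h) (a b c : ℝ≥0 × ℝ≥0) :
    ∃ u v, u + v = a + b + c ∧ h u + h v ≤ h a + h b + h c := by
  suffices ∀ w : Fin 3 → ℝ≥0 × ℝ≥0, ∃ u v, u + v = ∑ i, w i ∧ h u + h v ≤ ∑ i, h (w i) by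
    simpa [Fin.sum_univ_three] using this ![a, b, c]
  intro w
  by_cases hfin : ∀ i, h (w i) ≠ ⊤
  · lift h ∘ w to Fin 3 → ℝ≥0 using hfin with t ht
    have ht (i : Fin 3) : h (w i) = t i := (congrFun ht i).symm
    obtain ⟨c, ⟨i, hi⟩, hcw, hct⟩ := exists_smul_sum_eq_of_fin_three w t
    refine ⟨c (i.succAbove 0) • w (i.succAbove 0), c (i.succAbove 1) • w (i.succAbove 1), ?_, ?_⟩
    · simpa [Fin.sum_univ_succAbove _ i, hi] using hcw
    · have hct' : ∑ i, (c i : ℝ≥0∞) * t i ≤ ∑ i, (t i : ℝ≥0∞) := by exact_mod_cast hct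
      rw [Fin.sum_univ_succAbove _ i] at hct'
      simpa [hh _ _, ht, hi] using hct'
  · push Not at hfin
    obtain ⟨i, hi⟩ := hfin
    exact ⟨∑ i, w i, 0, add_zero _,
      le_top.trans_eq (ENNReal.sum_eq_top.2 ⟨i, Finset.mem_univ i, hi⟩).symm⟩

lemma isSublinear_infConv_self (hh : IsPosHomogeneous h) : IsSublinear (infConv h h) where
  smul_le := infConv_self_smul_le hh
  add_le r s := by
    simp only [infConv, ENNReal.iInf_add, ENNReal.add_iInf]
    change infConv h h (r + s) ≤ _
    refine le_iInf fun c => le_iInf fun d => le_iInf fun hcd => le_iInf fun a => le_iInf fun b =>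
      le_iInf fun hab => ?_
    obtain ⟨u, v, huv, huv_le⟩ := exists_add_eq_add_add hh a b c
    obtain ⟨u', v', huv', huv'_le⟩ := exists_add_eq_add_add hh u v d
    calc infConv h h (r + s) = infConv h h (u' + v') := by
          rw [huv', huv, ← hab, ← hcd, add_assoc (a + b)]
      _ ≤ h u' + h v' := infConv_add_le u' v'
      _ ≤ h u + h v + h d := huv'_le
      _ ≤ h a + h b + h c + h d := by gcongr
      _ = h a + h b + (h c + h d) := add_assoc _ _ _

lemma convexHullFn_eq_infConv_self (hh : IsPosHomogeneous h) : convexHullFn h = infConv h h :=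
  (convexHullFn_le_infConv_self hh).antisymm <|
    (isSublinear_infConv_self hh).convexENN.le_convexHullFn (infConv_self_le hh)

end Caratheodory

section HahnBanach

variable {E V : Type*} [AddCommMonoid E] [Module ℝ≥0 E] [TopologicalSpace E] [AddCommGroup V]
  [Module ℝ V] [TopologicalSpace V] [IsTopologicalAddGroup V] [ContinuousSMul ℝ V]
  [LocallyConvexSpace ℝ V] {e : E →ₗ[ℝ≥0] V} {k : E → ℝ≥0∞}

/-- The epigraph of a lower semicontinuous sublinear function, as a closed convex cone in the
ambient space `V × ℝ` of its domain. -/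
def IsSublinear.epigraphCone (hk : IsSublinear k) (hlsc : LowerSemicontinuous k)
    (he : IsClosedEmbedding e) : ProperCone ℝ (V × ℝ) where
  carrier := Prod.map e NNReal.toReal '' {p : E × ℝ≥0 | k p.1 ≤ p.2}
  zero_mem' := ⟨0, by simp [hk.map_zero], Prod.ext e.map_zero rfl⟩
  add_mem' := by
    rintro _ _ ⟨p, hp, rfl⟩ ⟨q, hq, rfl⟩
    refine ⟨p + q, (hk.add_le p.1 q.1).trans ?_, Prod.ext (e.map_add p.1 q.1) (NNReal.coe_add _ _)⟩
    rw [Prod.snd_add, ENNReal.coe_add]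
    exact add_le_add hp hq
  smul_mem' := by
    rintro c _ ⟨p, hp, rfl⟩
    refine ⟨(show ℝ≥0 from c) • p, (hk.smul_le c p.1).trans ?_, ?_⟩
    · rw [Prod.smul_snd, smul_eq_mul, ENNReal.coe_mul]
      gcongr
      exact hp
    · exact Prod.ext (e.map_smul c p.1) rfl
  isClosed' := (he.prodMap NNReal.isClosedEmbedding_coe).isClosedMap _ <|
    hlsc.isClosed_epigraph.preimage (f := fun p : E × ℝ≥0 => (p.1, (p.2 : ℝ≥0∞))) (by fun_prop)

lemma IsSublinear.exists_separating (hk : IsSublinear k) (hlsc : LowerSemicontinuous k)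
    (he : IsClosedEmbedding e) {r : E} {τ : ℝ≥0} (hτ : τ < k r) :
    ∃ (g : V →L[ℝ] ℝ) (c : ℝ), 0 ≤ c ∧ c * τ < g (e r) ∧
      ∀ (s : E) (t : ℝ≥0), k s ≤ t → g (e s) ≤ c * t := by
  have hnot : (e r, (τ : ℝ)) ∉ hk.epigraphCone hlsc he := by
    rintro ⟨⟨s, t⟩, hst, h⟩
    obtain ⟨hs, ht⟩ := Prod.mk.inj h
    obtain rfl := he.injective hs
    obtain rfl := NNReal.coe_injective ht
    exact hst.not_gt hτ
  obtain ⟨f, hf, hfr⟩ := ProperCone.hyperplane_separation_point _ hnot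
  have hsplit (v : V) (t : ℝ) : f (v, t) = f (0, 1) * t - (-(f.comp (.inl ℝ V ℝ))) v := by
    have : (v, t) = (v, (0 : ℝ)) + t • ((0 : V), (1 : ℝ)) := by simp
    rw [this, map_add, map_smul]
    simp [mul_comm, add_comm]
  refine ⟨-(f.comp (.inl ℝ V ℝ)), f (0, 1), ?_, ?_, fun s t hst => ?_⟩
  · exact hf _ ⟨(0, 1), by simp [hk.map_zero], by simp⟩
  · linarith [hsplit (e r) τ]
  · have hmem : (e s, (t : ℝ)) ∈ hk.epigraphCone hlsc he := ⟨(s, t), hst, rfl⟩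
    linarith [hsplit (e s) t, hf _ hmem]

lemma IsSublinear.exists_linear_le (hk : IsSublinear k) (hlsc : LowerSemicontinuous k)
    (he : IsClosedEmbedding e) {r : E} {τ : ℝ≥0} (hτ : τ < k r) :
    ∃ g : V →L[ℝ] ℝ, (∀ s, ENNReal.ofReal (g (e s)) ≤ k s) ∧ τ < g (e r) := by
  obtain ⟨g, c, hc, hgr, hg⟩ := hk.exists_separating hlsc he hτ
  have hden : 0 < g (e r) + c := by nlinarith [τ.coe_nonneg]
  obtain ⟨l, hl, hlc, hlr⟩ : ∃ l : ℝ, 0 ≤ l ∧ l * c ≤ 1 ∧ τ < l * g (e r) := by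
    refine ⟨(τ + 1) / (g (e r) + c), by positivity, ?_, ?_⟩
    · rw [div_mul_eq_mul_div, div_le_one hden]; linarith
    · rw [div_mul_eq_mul_div, lt_div_iff₀ hden]; linarith
  refine ⟨l • g, fun s => ?_, by simpa using hlr⟩
  rcases eq_or_ne (k s) ⊤ with htop | htop
  · simp [htop]
  · lift k s to ℝ≥0 using htop with t ht
    refine ENNReal.ofReal_le_coe.2 ?_
    calc l * g (e s) ≤ l * (c * t) := by gcongr; exact hg s t ht.ge
      _ = l * c * t := (mul_assoc l c t).symm
      _ ≤ t := mul_le_of_le_one_left t.coe_nonneg hlc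

end HahnBanach

lemma IsSublinear.exists_linear_le_nnreal_prod {k : ℝ≥0 × ℝ≥0 → ℝ≥0∞} (hk : IsSublinear k)
    (hlsc : LowerSemicontinuous k) {r : ℝ≥0 × ℝ≥0} {τ : ℝ≥0} (hτ : τ < k r) :
    ∃ p q : ℝ, (∀ s, ENNReal.ofReal (p * s.1 + q * s.2) ≤ k s) ∧ τ < p * r.1 + q * r.2 := by
  have he : IsClosedEmbedding
      ((Algebra.linearMap ℝ≥0 ℝ).prodMap (Algebra.linearMap ℝ≥0 ℝ)) :=
    NNReal.isClosedEmbedding_coe.prodMap NNReal.isClosedEmbedding_coe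
  obtain ⟨g, hg, hgr⟩ := hk.exists_linear_le hlsc he hτ
  have hcoord (s : ℝ≥0 × ℝ≥0) : g (s.1, s.2) = g (1, 0) * s.1 + g (0, 1) * s.2 := by
    have : ((s.1 : ℝ), (s.2 : ℝ)) = (s.1 : ℝ) • (1, 0) + (s.2 : ℝ) • (0, 1) := by simp
    rw [this, map_add, map_smul, map_smul]
    simp [mul_comm]
  exact ⟨g (1, 0), g (0, 1), fun s => hcoord s ▸ hg s, hcoord r ▸ hgr⟩

lemma isSublinear_ofReal (p q : ℝ) :
    IsSublinear fun s : ℝ≥0 × ℝ≥0 => ENNReal.ofReal (p * s.1 + q * s.2) where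
  add_le a b := by
    refine le_trans (ENNReal.ofReal_le_ofReal (le_of_eq ?_)) ENNReal.ofReal_add_le
    simp only [Prod.fst_add, Prod.snd_add, NNReal.coe_add]
    ring
  smul_le c s := by
    rw [← ENNReal.ofReal_coe_nnreal, ← ENNReal.ofReal_mul c.coe_nonneg]
    refine ENNReal.ofReal_le_ofReal (le_of_eq ?_)
    simp only [Prod.smul_fst, Prod.smul_snd, smul_eq_mul, NNReal.coe_mul]
    ring

section Cone

variable {X : Type*}

namespace Cone

lemma mk_zero_eq (x y : X) : mk X x 0 = mk X y 0 :=
  Quotient.sound (Or.inr ⟨rfl, rfl⟩)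

lemma mk_surjective (y : Cone X) : ∃ x r, mk X x r = y := by
  induction y using Quotient.inductionOn with
  | h p => exact ⟨p.1, p.2, rfl⟩

lemma mk_eq_mk_iff {x y : X} {r s : ℝ≥0} :
    mk X x r = mk X y s ↔ (x, r) = (y, s) ∨ (r = 0 ∧ s = 0) :=
  ⟨fun h => Quotient.exact h, fun h => Quotient.sound h⟩

@[simp]
lemma radius_mk (x : X) (r : ℝ≥0) : radius X (mk X x r) = r := rfl

@[simp]
lemma smul_mk (c : ℝ≥0) (x : X) (r : ℝ≥0) : smul X c (mk X x r) = mk X x (c * r) := rfl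

@[simp]
lemma radius_smul (c : ℝ≥0) (y : Cone X) : radius X (smul X c y) = c * radius X y := by
  obtain ⟨x, r, rfl⟩ := mk_surjective y
  rfl

section BasePt

variable [Nonempty X]

lemma basePt_mk (x : X) {r : ℝ≥0} (hr : r ≠ 0) : basePt X (mk X x r) = x := if_neg hr

lemma mk_basePt_radius (y : Cone X) : mk X (basePt X y) (radius X y) = y := by
  obtain ⟨x, r, rfl⟩ := mk_surjective y
  rcases eq_or_ne r 0 with rfl | hr
  · exact mk_zero_eq _ _
  · rw [basePt_mk x hr, radius_mk]

lemma basePt_of_radius_eq_zero {y : Cone X} (hy : radius X y = 0) :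
    basePt X y = Classical.arbitrary X := by
  obtain ⟨x, r, rfl⟩ := mk_surjective y
  exact if_pos hy

lemma basePt_smul {c : ℝ≥0} {y : Cone X} (h : c * radius X y ≠ 0) :
    basePt X (smul X c y) = basePt X y := by
  obtain ⟨x, r, rfl⟩ := mk_surjective y
  rw [radius_mk] at h
  rw [smul_mk, basePt_mk x h, basePt_mk x (right_ne_zero_of_mul h)]

end BasePt

variable [TopologicalSpace X]

lemma isOpen_iff {U : Set (Cone X)} : IsOpen U ↔
    IsOpen ((fun p : X × ℝ≥0 => mk X p.1 p.2) ⁻¹' U) ∧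
      ∀ x : X, mk X x 0 ∈ U →
        ∃ ε : ℝ≥0, 0 < ε ∧ ∀ (y : X) (r : ℝ≥0), r < ε → mk X y r ∈ U := Iff.rfl

lemma continuous_mk : Continuous fun p : X × ℝ≥0 => mk X p.1 p.2 :=
  ⟨fun _ hU => (isOpen_iff.1 hU).1⟩

lemma isOpen_image_mk {W : Set (X × ℝ≥0)} (hW : IsOpen W) (h0 : ∀ p ∈ W, p.2 ≠ 0) :
    IsOpen ((fun p : X × ℝ≥0 => mk X p.1 p.2) '' W) := by
  have hmem : ∀ p : X × ℝ≥0, mk X p.1 p.2 ∈ (fun p : X × ℝ≥0 => mk X p.1 p.2) '' W ↔ p ∈ W := by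
    refine fun p => ⟨?_, fun hp => ⟨p, hp, rfl⟩⟩
    rintro ⟨q, hq, hqp⟩
    rcases mk_eq_mk_iff.1 hqp with h | h
    · rwa [← show q = p from h]
    · exact absurd h.1 (h0 q hq)
  refine isOpen_iff.2 ⟨?_, fun x hx => absurd rfl (h0 (x, 0) ((hmem (x, 0)).1 hx))⟩
  convert hW
  exact Set.ext hmem

lemma nhds_mk (x : X) {r : ℝ≥0} (hr : r ≠ 0) :
    𝓝 (mk X x r) = map (fun p : X × ℝ≥0 => mk X p.1 p.2) (𝓝 (x, r)) := by
  refine le_antisymm (fun s hs => ?_) (continuous_mk.continuousAt (x := (x, r)))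
  have hopen : IsOpen {p : X × ℝ≥0 | p.2 ≠ 0} := isOpen_ne.preimage continuous_snd
  obtain ⟨W, hWs, hW, hxW⟩ := mem_nhds_iff.1 (inter_mem (mem_map.1 hs) (hopen.mem_nhds hr))
  refine mem_nhds_iff.2 ⟨_, ?_, isOpen_image_mk hW fun p hp => (hWs hp).2, _, hxW, rfl⟩
  rintro _ ⟨p, hp, rfl⟩
  exact (hWs hp).1

lemma exists_forall_radius_lt_mem {y : Cone X} (hy : radius X y = 0) {U : Set (Cone X)}
    (hU : U ∈ 𝓝 y) : ∃ ε : ℝ≥0, 0 < ε ∧ ∀ z, radius X z < ε → z ∈ U := by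
  obtain ⟨x, r, rfl⟩ := mk_surjective y
  obtain rfl : r = 0 := hy
  obtain ⟨V, hVU, hV, hxV⟩ := mem_nhds_iff.1 hU
  obtain ⟨ε, hε, h⟩ := (isOpen_iff.1 hV).2 x hxV
  refine ⟨ε, hε, fun z hz => hVU ?_⟩
  obtain ⟨x', r', rfl⟩ := mk_surjective z
  exact h x' r' hz

lemma continuous_radius : Continuous (radius X) := by
  refine ⟨fun U hU => isOpen_iff.2 ⟨hU.preimage continuous_snd, fun x hx => ?_⟩⟩
  have h0 : (0 : ℝ≥0) ∈ U := hx
  obtain ⟨ε, hε, h⟩ := exists_Ico_subset_of_mem_nhds (hU.mem_nhds h0) ⟨1, one_pos⟩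
  exact ⟨ε, hε, fun y r hr => h ⟨zero_le, hr⟩⟩

lemma continuous_smul : Continuous fun q : ℝ≥0 × Cone X => smul X q.1 q.2 := by
  refine continuous_iff_continuousAt.2 fun ⟨c, y⟩ => ?_
  rcases eq_or_ne (radius X y) 0 with hy | hy
  · intro U hU
    obtain ⟨ε, hε, h⟩ := exists_forall_radius_lt_mem (by rw [radius_smul, hy, mul_zero]) hU
    rw [mem_map]
    have hopen : IsOpen {q : ℝ≥0 × Cone X | q.1 * radius X q.2 < ε} :=
      isOpen_lt (continuous_fst.mul (continuous_radius.comp continuous_snd)) continuous_const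
    have hmem : (c, y) ∈ {q : ℝ≥0 × Cone X | q.1 * radius X q.2 < ε} := by
      simpa [hy] using hε
    filter_upwards [hopen.mem_nhds hmem] with q hq
    exact h _ (by rwa [radius_smul])
  · obtain ⟨x, r, rfl⟩ := mk_surjective y
    rw [ContinuousAt, nhds_prod_eq, nhds_mk x (r := r) hy, ← Filter.map_id (f := 𝓝 c),
      Filter.prod_map_map_eq, tendsto_map'_iff, ← nhds_prod_eq]
    exact (continuous_mk.comp (f := fun q : ℝ≥0 × (X × ℝ≥0) => (q.2.1, q.1 * q.2.2))
      (by fun_prop)).continuousAt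

lemma continuousOn_basePt [Nonempty X] : ContinuousOn (basePt X) {y | radius X y ≠ 0} := by
  refine fun y hy => ContinuousAt.continuousWithinAt ?_
  obtain ⟨x, r, rfl⟩ := mk_surjective y
  rw [ContinuousAt, nhds_mk x (r := r) hy, tendsto_map'_iff, basePt_mk x (r := r) hy]
  refine (continuous_fst.tendsto (x, r)).congr' ?_
  filter_upwards [(isOpen_ne.preimage continuous_snd).mem_nhds hy] with p hp
  exact (basePt_mk p.1 hp).symm

lemma measurable_basePt [Nonempty X] [MeasurableSpace X] [BorelSpace X] :
    Measurable (basePt X) := by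
  have hopen : IsOpen {y : Cone X | radius X y ≠ 0} := isOpen_ne.preimage continuous_radius
  refine measurable_of_restrict_of_restrict_compl hopen.measurableSet
    continuousOn_basePt.domRestrict.measurable ?_
  convert measurable_const (a := Classical.arbitrary X) using 1
  exact funext fun y => basePt_of_radius_eq_zero (not_not.1 y.2)

end Cone

end Cone

section Selection

variable {Z I J : Type*} [TopologicalSpace Z] [TopologicalSpace I] [TopologicalSpace J]
  [CompactSpace I] [CompactSpace J]

lemma exists_eq_biInf_of_isClosed {K : Set I} (hK : IsClosed K) (hne : K.Nonempty)
    {f : I → ℝ≥0∞} (hf : LowerSemicontinuous f) : ∃ i ∈ K, f i = ⨅ j ∈ K, f j := by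
  obtain ⟨i, hi, hmin⟩ := (hf.lowerSemicontinuousOn K).exists_isMinOn hne hK.isCompact
  exact ⟨i, hi, le_antisymm (le_iInf₂ fun _ hj => hmin hj) (iInf₂_le i hi)⟩

lemma lowerSemicontinuous_biInf_of_isClosed {K : Set I} (hK : IsClosed K) (hne : K.Nonempty)
    {G : Z × I → ℝ≥0∞} (hG : LowerSemicontinuous G) :
    LowerSemicontinuous fun z => ⨅ i ∈ K, G (z, i) := by
  refine lowerSemicontinuous_iff_isClosed_preimage.2 fun c => ?_
  convert isClosedMap_fst_of_compactSpace _
    ((hG.isClosed_preimage c).inter (hK.preimage (continuous_snd (X := Z)))) using 1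
  refine Set.Subset.antisymm (fun z hz => ?_) ?_
  · obtain ⟨i, hi, h⟩ := exists_eq_biInf_of_isClosed hK hne (hG.comp (Continuous.prodMk_right z))
    exact ⟨(z, i), ⟨h.trans_le hz, hi⟩, rfl⟩
  · rintro _ ⟨⟨z, i⟩, ⟨h, hi⟩, rfl⟩
    exact (iInf₂_le (f := fun i _ => G (z, i)) i hi).trans h

lemma lowerSemicontinuous_iInf_of_compactSpace [Nonempty I] {G : Z × I → ℝ≥0∞}
    (hG : LowerSemicontinuous G) : LowerSemicontinuous fun z => ⨅ i, G (z, i) := by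
  simpa only [iInf_univ] using lowerSemicontinuous_biInf_of_isClosed isClosed_univ univ_nonempty hG

variable [MeasurableSpace Z] [OpensMeasurableSpace Z]
  [LinearOrder I] [OrderTopology I] [SecondCountableTopology I] [Nonempty I]
  [MeasurableSpace I] [BorelSpace I]
  [LinearOrder J] [OrderTopology J] [SecondCountableTopology J] [Nonempty J]
  [MeasurableSpace J] [BorelSpace J]

/-- The least minimiser is measurable: it is at most `c` exactly when the minimum over `Iic c`
is the global one. -/
lemma exists_measurable_eq_iInf {G : Z × I → ℝ≥0∞} (hG : LowerSemicontinuous G) :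
    ∃ θ : Z → I, Measurable θ ∧ ∀ z, G (z, θ z) = ⨅ i, G (z, i) := by
  have hslice : ∀ z, LowerSemicontinuous fun i => G (z, i) :=
    fun z => hG.comp (Continuous.prodMk_right z)
  have hleast : ∀ z, ∃ i, IsLeast {i | G (z, i) ≤ ⨅ j, G (z, j)} i := fun z => by
    refine ((hslice z).isClosed_preimage _).isCompact.exists_isLeast ?_
    obtain ⟨i, -, hi⟩ := exists_eq_biInf_of_isClosed isClosed_univ univ_nonempty (hslice z)
    exact ⟨i, hi.trans_le iInf_univ.le⟩
  choose θ hθ using hleast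
  refine ⟨θ, measurable_of_Iic fun c => ?_, fun z => (hθ z).1.antisymm (iInf_le _ _)⟩
  convert measurableSet_le
    (lowerSemicontinuous_biInf_of_isClosed isClosed_Iic ⟨c, self_mem_Iic⟩ hG).measurable
    (lowerSemicontinuous_iInf_of_compactSpace hG).measurable using 1
  refine Set.Subset.antisymm (fun z hz => ?_) fun z hz => ?_
  · exact (iInf₂_le (f := fun i _ => G (z, i)) (θ z) hz).trans (hθ z).1
  · obtain ⟨i, hi, h⟩ := exists_eq_biInf_of_isClosed isClosed_Iic ⟨c, self_mem_Iic⟩ (hslice z)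
    exact ((hθ z).2 (h.trans_le hz)).trans hi

lemma exists_measurable_prod_eq_iInf {G : Z × I × J → ℝ≥0∞} (hG : LowerSemicontinuous G) :
    ∃ θ : Z → I × J, Measurable θ ∧ ∀ z, G (z, θ z) = ⨅ ij, G (z, ij) := by
  have hG' : LowerSemicontinuous fun w : (Z × I) × J => G (w.1.1, w.1.2, w.2) :=
    hG.comp (by fun_prop)
  obtain ⟨η, hη, hηmin⟩ := exists_measurable_eq_iInf hG'
  obtain ⟨θ, hθ, hθmin⟩ := exists_measurable_eq_iInf (lowerSemicontinuous_iInf_of_compactSpace hG')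
  refine ⟨fun z => (θ z, η (z, θ z)), hθ.prodMk (hη.comp (measurable_id.prodMk hθ)), fun z => ?_⟩
  rw [iInf_prod]
  exact (hηmin (z, θ z)).trans (hθmin z)

end Selection

section Splitting

open scoped unitInterval
open unitInterval (toNNReal)

variable {Y₁ Y₂ : Type*} {H : Cone Y₁ × Cone Y₂ → ℝ≥0∞}

lemma exists_unitInterval_mul_add (a b : ℝ≥0) : ∃ θ : unitInterval,
    toNNReal θ * (a + b) = a ∧ toNNReal (σ θ) * (a + b) = b := by
  have exists_mul_eq : ∃ θ : unitInterval, toNNReal θ * (a + b) = a := by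
    rcases eq_or_ne (a + b) 0 with h | h
    · exact ⟨0, by rw [h, mul_zero, (add_eq_zero.1 h).1]⟩
    · have hle : a / (a + b) ≤ 1 := div_le_one_of_le₀ le_self_add zero_le
      exact ⟨⟨(a / (a + b) : ℝ≥0), NNReal.coe_nonneg _, by exact_mod_cast hle⟩, div_mul_cancel₀ a h⟩
  obtain ⟨θ, hθ⟩ := exists_mul_eq
  refine ⟨θ, hθ, add_left_cancel (a := a) ?_⟩
  calc a + toNNReal (σ θ) * (a + b) = (toNNReal θ + toNNReal (σ θ)) * (a + b) := by
        rw [add_mul, hθ]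
    _ = a + b := by rw [unitInterval.toNNReal_add_toNNReal_symm, one_mul]

/-- Independent radial rescaling of the two components of a point of the product cone. -/
def scaleProd (c : ℝ≥0 × ℝ≥0) (y : Cone Y₁ × Cone Y₂) : Cone Y₁ × Cone Y₂ :=
  (Cone.smul Y₁ c.1 y.1, Cone.smul Y₂ c.2 y.2)

/-- The least total cost of splitting a point of the product cone into two points with the same
base points; `θ` are the fractions of the two radii given to the first one. -/
def splitCost (H : Cone Y₁ × Cone Y₂ → ℝ≥0∞) (y : Cone Y₁ × Cone Y₂) : ℝ≥0∞ :=
  ⨅ θ : unitInterval × unitInterval, (H (scaleProd (toNNReal θ.1, toNNReal θ.2) y) +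
    H (scaleProd (toNNReal (σ θ.1), toNNReal (σ θ.2)) y))

lemma secF_splitCost (x₁ : Y₁) (x₂ : Y₂) :
    secF (splitCost H) x₁ x₂ = infConv (secF H x₁ x₂) (secF H x₁ x₂) := by
  refine funext fun r => le_antisymm (le_infConv ?_) (le_iInf fun θ => ?_)
  · rintro a b rfl
    obtain ⟨θ₁, h₁, h₁'⟩ := exists_unitInterval_mul_add a.1 b.1
    obtain ⟨θ₂, h₂, h₂'⟩ := exists_unitInterval_mul_add a.2 b.2
    refine (iInf_le _ (θ₁, θ₂)).trans_eq ?_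
    simp only [scaleProd, secF, Cone.smul_mk, Prod.fst_add, Prod.snd_add, h₁, h₁', h₂, h₂']
  · have hr : (toNNReal θ.1, toNNReal θ.2) * r + (toNNReal (σ θ.1), toNNReal (σ θ.2)) * r = r := by
      rw [← add_mul]
      simp [← Prod.one_eq_mk]
    exact (congrArg _ hr.symm).trans_le (infConv_add_le _ _)

lemma radialConvexification_le [Nonempty Y₁] [Nonempty Y₂] : radialConvexification H ≤ H := fun y =>
  (convexHullFn_le _).trans_eq <| by
    rw [secF, Cone.mk_basePt_radius, Cone.mk_basePt_radius]

variable {H : Cone X₁ × Cone X₂ → ℝ≥0∞}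

lemma continuous_scaleProd :
    Continuous fun z : (ℝ≥0 × ℝ≥0) × (Cone X₁ × Cone X₂) => scaleProd z.1 z.2 :=
  (Cone.continuous_smul.comp (f := fun z : (ℝ≥0 × ℝ≥0) × (Cone X₁ × Cone X₂) => (z.1.1, z.2.1))
    (by fun_prop)).prodMk
  (Cone.continuous_smul.comp (f := fun z : (ℝ≥0 × ℝ≥0) × (Cone X₁ × Cone X₂) => (z.1.2, z.2.2))
    (by fun_prop))

lemma lowerSemicontinuous_add_scaleProd (hlsc : LowerSemicontinuous H) :
    LowerSemicontinuous fun z : (Cone X₁ × Cone X₂) × (unitInterval × unitInterval) =>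
      H (scaleProd (toNNReal z.2.1, toNNReal z.2.2) z.1) +
        H (scaleProd (toNNReal (σ z.2.1), toNNReal (σ z.2.2)) z.1) := by
  have hcont := unitInterval.toNNReal_continuous
  refine (hlsc.comp (continuous_scaleProd.comp (Continuous.prodMk ?_ continuous_fst))).add
    (hlsc.comp (continuous_scaleProd.comp (Continuous.prodMk ?_ continuous_fst)))
  · exact (hcont.comp' (by fun_prop)).prodMk (hcont.comp' (by fun_prop))
  · exact (hcont.comp' (by fun_prop)).prodMk (hcont.comp' (by fun_prop))

lemma lowerSemicontinuous_splitCost (hlsc : LowerSemicontinuous H) :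
    LowerSemicontinuous (splitCost H) :=
  lowerSemicontinuous_iInf_of_compactSpace (lowerSemicontinuous_add_scaleProd hlsc)

lemma continuous_mk_mk (x₁ : X₁) (x₂ : X₂) :
    Continuous fun r : ℝ≥0 × ℝ≥0 => (Cone.mk X₁ x₁ r.1, Cone.mk X₂ x₂ r.2) :=
  (Cone.continuous_mk.comp (Continuous.prodMk continuous_const continuous_fst)).prodMk
    (Cone.continuous_mk.comp (Continuous.prodMk continuous_const continuous_snd))

lemma apply_vertex (hproper : ProperCost H) (hhom : RadiallyHomogeneous H)
    (hlsc : LowerSemicontinuous H) (x₁ : X₁) (x₂ : X₂) :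
    H (Cone.mk X₁ x₁ 0, Cone.mk X₂ x₂ 0) = 0 := by
  obtain ⟨⟨y₁, y₂⟩, hy⟩ := hproper
  obtain ⟨u₁, r₁, rfl⟩ := Cone.mk_surjective y₁
  obtain ⟨u₂, r₂, rfl⟩ := Cone.mk_surjective y₂
  rw [Cone.mk_zero_eq x₁ u₁, Cone.mk_zero_eq x₂ u₂]
  have hray : LowerSemicontinuous fun c : ℝ≥0 => secF H u₁ u₂ (c * r₁, c * r₂) :=
    hlsc.comp ((continuous_mk_mk u₁ u₂).comp (f := fun c : ℝ≥0 => (c * r₁, c * r₂)) (by fun_prop))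
  have hmul : Tendsto (fun c : ℝ≥0 => c * secF H u₁ u₂ (r₁, r₂)) (𝓝[>] 0) (𝓝 0) := by
    simpa [secF] using ENNReal.Tendsto.mul_const
      ((ENNReal.continuous_coe.tendsto' 0 0 rfl).mono_left nhdsWithin_le_nhds) (Or.inr hy)
  by_contra hne
  obtain ⟨τ, hτ0, hτ⟩ := exists_between (pos_iff_ne_zero.2 hne)
  have hlt : ∀ᶠ c in 𝓝[>] (0 : ℝ≥0), τ < secF H u₁ u₂ (c * r₁, c * r₂) :=
    (hray 0 τ (by simpa [secF] using hτ)).filter_mono nhdsWithin_le_nhds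
  obtain ⟨c, ⟨hτc, hcτ⟩, hc⟩ :=
    ((hlt.and (hmul.eventually_lt_const hτ0)).and self_mem_nhdsWithin).exists
  exact lt_asymm hcτ (hτc.trans_eq (hhom u₁ u₂ r₁ r₂ c hc))

lemma isPosHomogeneous_secF (hproper : ProperCost H) (hhom : RadiallyHomogeneous H)
    (hlsc : LowerSemicontinuous H) (x₁ : X₁) (x₂ : X₂) : IsPosHomogeneous (secF H x₁ x₂) := by
  intro c r
  rcases eq_or_ne c 0 with rfl | hc
  · simpa [secF] using apply_vertex hproper hhom hlsc x₁ x₂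
  · exact hhom x₁ x₂ r.1 r.2 c (pos_iff_ne_zero.2 hc)

variable [Nonempty X₁] [Nonempty X₂]

lemma radialConvexification_eq_splitCost (hproper : ProperCost H) (hhom : RadiallyHomogeneous H)
    (hlsc : LowerSemicontinuous H) : radialConvexification H = splitCost H := by
  funext y
  rw [radialConvexification,
    convexHullFn_eq_infConv_self (isPosHomogeneous_secF hproper hhom hlsc _ _), ← secF_splitCost,
    secF, Cone.mk_basePt_radius, Cone.mk_basePt_radius]

lemma lowerSemicontinuous_radialConvexification (hproper : ProperCost H)
    (hhom : RadiallyHomogeneous H) (hlsc : LowerSemicontinuous H) :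
    LowerSemicontinuous (radialConvexification H) :=
  radialConvexification_eq_splitCost hproper hhom hlsc ▸ lowerSemicontinuous_splitCost hlsc

lemma secF_radialConvexification (hproper : ProperCost H) (hhom : RadiallyHomogeneous H)
    (hlsc : LowerSemicontinuous H) (x₁ : X₁) (x₂ : X₂) :
    secF (radialConvexification H) x₁ x₂ = convexHullFn (secF H x₁ x₂) := by
  rw [radialConvexification_eq_splitCost hproper hhom hlsc, secF_splitCost,
    convexHullFn_eq_infConv_self (isPosHomogeneous_secF hproper hhom hlsc x₁ x₂)]

end Splitting

section Transport

namespace Cone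

variable {X : Type*}

lemma measurable_radius [TopologicalSpace X] : Measurable fun y : Cone X => (radius X y : ℝ≥0∞) :=
  measurable_coe_nnreal_ennreal.comp continuous_radius.measurable

variable [Nonempty X]

/-- The contribution of a point of the cone to the `1`-homogeneous marginal on `s`: its radius if
its base point lies in `s`, and `0` otherwise. -/
def radialMass (s : Set X) : Cone X → ℝ≥0∞ :=
  (basePt X ⁻¹' s).indicator fun y => radius X y

lemma radialMass_smul (s : Set X) (c : ℝ≥0) (y : Cone X) :
    radialMass s (smul X c y) = c * radialMass s y := by
  classical
  simp only [radialMass, indicator_apply, mem_preimage, radius_smul, ENNReal.coe_mul, mul_ite,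
    mul_zero]
  by_cases h : c * radius X y = 0
  · simp [← ENNReal.coe_mul, h]
  · rw [basePt_smul h]

lemma measurable_radialMass [TopologicalSpace X] [MeasurableSpace X] [BorelSpace X] {s : Set X}
    (hs : MeasurableSet s) : Measurable (radialMass s) :=
  measurable_radius.indicator (measurable_basePt hs)

end Cone

/-- The measure obtained from `α` by splitting each point `y` into its rescalings by `c y` and
`d y`. -/
def splitMeasure (α : Measure (Cone X₁ × Cone X₂)) (c d : Cone X₁ × Cone X₂ → ℝ≥0 × ℝ≥0) :
    Measure (Cone X₁ × Cone X₂) :=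
  α.map (fun y => scaleProd (c y) y) + α.map (fun y => scaleProd (d y) y)

variable {α : Measure (Cone X₁ × Cone X₂)} {c d : Cone X₁ × Cone X₂ → ℝ≥0 × ℝ≥0}

lemma lintegral_splitMeasure (hc : Measurable c) (hd : Measurable d)
    {f : Cone X₁ × Cone X₂ → ℝ≥0∞} (hf : Measurable f) :
    ∫⁻ y, f y ∂splitMeasure α c d =
      ∫⁻ y, f (scaleProd (c y) y) + f (scaleProd (d y) y) ∂α := by
  have hmeas : ∀ {c : Cone X₁ × Cone X₂ → ℝ≥0 × ℝ≥0}, Measurable c →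
      Measurable fun y => scaleProd (c y) y :=
    fun hc => continuous_scaleProd.measurable.comp (hc.prodMk measurable_id)
  rw [splitMeasure, lintegral_add_measure, lintegral_map hf (hmeas hc), lintegral_map hf (hmeas hd),
    lintegral_add_left (hf.fun_comp (hmeas hc))]

section Marginals

lemma homMarginalFst_one_apply [Nonempty X₁] [MeasurableSpace X₁] [BorelSpace X₁]
    {s : Set X₁} (hs : MeasurableSet s) :
    homMarginalFst 1 α s = ∫⁻ y, Cone.radialMass s y.1 ∂α := by
  have hbase : Measurable fun y : Cone X₁ × Cone X₂ => Cone.basePt X₁ y.1 :=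
    Cone.measurable_basePt.comp continuous_fst.measurable
  rw [homMarginalFst, Measure.map_apply hbase hs, withDensity_apply _ (hbase hs),
    ← lintegral_indicator (hbase hs)]
  simp only [ENNReal.rpow_one]
  rfl

lemma homMarginalSnd_one_apply [Nonempty X₂] [MeasurableSpace X₂] [BorelSpace X₂]
    {s : Set X₂} (hs : MeasurableSet s) :
    homMarginalSnd 1 α s = ∫⁻ y, Cone.radialMass s y.2 ∂α := by
  have hbase : Measurable fun y : Cone X₁ × Cone X₂ => Cone.basePt X₂ y.2 :=
    Cone.measurable_basePt.comp continuous_snd.measurable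
  rw [homMarginalSnd, Measure.map_apply hbase hs, withDensity_apply _ (hbase hs),
    ← lintegral_indicator (hbase hs)]
  simp only [ENNReal.rpow_one]
  rfl

variable [Nonempty X₁] [Nonempty X₂] [MeasurableSpace X₁] [MeasurableSpace X₂]
  [BorelSpace X₁] [BorelSpace X₂]

lemma IsHomCoupling.splitMeasure {μ₁ : Measure X₁} {μ₂ : Measure X₂}
    (hα : IsHomCoupling 1 α μ₁ μ₂) (hc : Measurable c) (hd : Measurable d)
    (hcd : ∀ y, c y + d y = 1) : IsHomCoupling 1 (splitMeasure α c d) μ₁ μ₂ := by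
  obtain ⟨hfin, hmoment, rfl, rfl⟩ := hα
  have hfst : ∀ y, ((c y).1 : ℝ≥0∞) + (d y).1 = 1 := fun y => by
    exact_mod_cast congrArg Prod.fst (hcd y)
  have hsnd : ∀ y, ((c y).2 : ℝ≥0∞) + (d y).2 = 1 := fun y => by
    exact_mod_cast congrArg Prod.snd (hcd y)
  refine ⟨by unfold UOT.splitMeasure; infer_instance, ?_, Measure.ext fun s hs => ?_,
    Measure.ext fun s hs => ?_⟩
  · simp only [ENNReal.rpow_one] at hmoment ⊢
    rw [lintegral_splitMeasure hc hd
      ((Cone.measurable_radius.fun_comp continuous_fst.measurable).fun_add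
        (Cone.measurable_radius.fun_comp continuous_snd.measurable))]
    refine ne_of_eq_of_ne (lintegral_congr fun y => ?_) hmoment
    simp only [scaleProd, Cone.radius_smul, ENNReal.coe_mul]
    rw [add_add_add_comm, ← add_mul, ← add_mul, hfst, hsnd, one_mul, one_mul]
  · rw [homMarginalFst_one_apply hs, homMarginalFst_one_apply hs, lintegral_splitMeasure hc hd
      ((Cone.measurable_radialMass hs).fun_comp continuous_fst.measurable)]
    refine lintegral_congr fun y => ?_
    simp only [scaleProd, Cone.radialMass_smul]
    rw [← add_mul, hfst, one_mul]
  · rw [homMarginalSnd_one_apply hs, homMarginalSnd_one_apply hs, lintegral_splitMeasure hc hd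
      ((Cone.measurable_radialMass hs).fun_comp continuous_snd.measurable)]
    refine lintegral_congr fun y => ?_
    simp only [scaleProd, Cone.radialMass_smul]
    rw [← add_mul, hsnd, one_mul]

end Marginals

variable {H : Cone X₁ × Cone X₂ → ℝ≥0∞}

lemma exists_measurable_split_eq (hlsc : LowerSemicontinuous H) :
    ∃ c d : Cone X₁ × Cone X₂ → ℝ≥0 × ℝ≥0, Measurable c ∧ Measurable d ∧ (∀ y, c y + d y = 1) ∧
      ∀ y, H (scaleProd (c y) y) + H (scaleProd (d y) y) = splitCost H y := by
  obtain ⟨θ, hθ, hmin⟩ :=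
    exists_measurable_prod_eq_iInf (lowerSemicontinuous_add_scaleProd hlsc)
  have hmeas := unitInterval.toNNReal_continuous.measurable
  have hsymm := unitInterval.continuous_symm.measurable
  exact ⟨_, _, (hmeas.comp hθ.fst).prodMk (hmeas.comp hθ.snd),
    (hmeas.comp (hsymm.comp hθ.fst)).prodMk (hmeas.comp (hsymm.comp hθ.snd)),
    fun y => by simp [Prod.one_eq_mk], hmin⟩

variable [Nonempty X₁] [Nonempty X₂] [MeasurableSpace X₁] [MeasurableSpace X₂]

lemma UH_radialConvexification [BorelSpace X₁] [BorelSpace X₂] (hproper : ProperCost H)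
    (hhom : RadiallyHomogeneous H) (hlsc : LowerSemicontinuous H)
    (μ₁ : Measure X₁) (μ₂ : Measure X₂) :
    UH (radialConvexification H) μ₁ μ₂ = UH H μ₁ μ₂ := by
  refine le_antisymm (iInf₂_mono fun α _ => lintegral_mono radialConvexification_le)
    (le_iInf₂ fun α hα => ?_)
  obtain ⟨c, d, hc, hd, hcd, hsplit⟩ := exists_measurable_split_eq hlsc
  refine iInf₂_le_of_le _ (hα.splitMeasure hc hd hcd) (le_of_eq ?_)
  rw [lintegral_splitMeasure hc hd hlsc.measurable,
    radialConvexification_eq_splitCost hproper hhom hlsc]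
  exact lintegral_congr hsplit

end Transport

section SingularCost

variable [Nonempty X₁] [Nonempty X₂] [MeasurableSpace X₁] [MeasurableSpace X₂]
  {H : Cone X₁ × Cone X₂ → ℝ≥0∞}

lemma ConvexENN.le_singCost_radialConvexification
    {g : FiniteMeasure X₁ × FiniteMeasure X₂ → ℝ≥0∞} (hg : ConvexENN g) (hgH : g ≤ singCost H) :
    g ≤ singCost (radialConvexification H) := by
  rintro ⟨ν₁, ν₂⟩
  refine le_iInf₂ fun ⟨y₁, y₂⟩ ⟨h₁, h₂⟩ => ?_
  obtain rfl := h₁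
  obtain rfl := h₂
  let diracPair : ℝ≥0 × ℝ≥0 → FiniteMeasure X₁ × FiniteMeasure X₂ :=
    fun r => (r.1 • diracFM (Cone.basePt X₁ y₁), r.2 • diracFM (Cone.basePt X₂ y₂))
  have hconv : ConvexENN (g ∘ diracPair) := by
    intro a b t ht
    have hlin : diracPair (t • a + (1 - t) • b) = t • diracPair a + (1 - t) • diracPair b := by
      simp [diracPair, add_smul, mul_smul]
    exact (congrArg g hlin).trans_le (hg _ _ t ht)
  have hle : g ∘ diracPair ≤ secF H (Cone.basePt X₁ y₁) (Cone.basePt X₂ y₂) :=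
    fun r => (hgH _).trans (iInf₂_le (Cone.mk X₁ _ r.1, Cone.mk X₂ _ r.2) ⟨rfl, rfl⟩)
  refine le_trans (le_of_eq ?_)
    (hconv.le_convexHullFn hle (Cone.radius X₁ y₁, Cone.radius X₂ y₂))
  conv_lhs => rw [← Cone.mk_basePt_radius y₁, ← Cone.mk_basePt_radius y₂]
  rfl

lemma lscConvexHull_singCost_radialConvexification [OpensMeasurableSpace X₁]
    [OpensMeasurableSpace X₂] :
    lscConvexHull (singCost (radialConvexification H)) = lscConvexHull (singCost H) := by
  refine le_antisymm (fun ν => iSup₂_le fun g hg => ?_) fun ν => iSup₂_le fun g hg => ?_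
  · refine le_iSup₂_of_le g ⟨hg.1, hg.2.1, hg.2.2.trans fun ν => ?_⟩ le_rfl
    exact iInf₂_mono fun y _ => radialConvexification_le y
  · exact le_iSup₂_of_le g ⟨hg.1, hg.2.1, hg.2.1.le_singCost_radialConvexification hg.2.2⟩ le_rfl

end SingularCost

section Potentials

open scoped unitInterval
open unitInterval (toNNReal)

lemma eventually_ofReal_sub_le {E : Type*} [TopologicalSpace E] {G : E → ℝ≥0∞} {m : E → ℝ} {z : E}
    (hG : LowerSemicontinuousAt G z) (hm : ContinuousAt m z) {ε : ℝ} (hε : 0 < ε)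
    (hle : ENNReal.ofReal (m z) ≤ G z) : ∀ᶠ w in 𝓝 z, ENNReal.ofReal (m w - ε) ≤ G w := by
  rcases le_or_gt (m z) 0 with hz | hz
  · filter_upwards [hm.eventually_lt_const (hz.trans_lt hε)] with w hw
    rw [ENNReal.ofReal_of_nonpos (by linarith)]
    exact zero_le
  · have hlt : ENNReal.ofReal (m z - ε / 2) < G z :=
      ((ENNReal.ofReal_lt_ofReal_iff hz).2 (by linarith)).trans_le hle
    filter_upwards [hG _ hlt, hm.eventually_lt_const (by linarith : m z < m z + ε / 2)]
      with w hGw hw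
    exact (ENNReal.ofReal_le_ofReal (by linarith)).trans hGw.le

lemma exists_continuous_bump {X : Type*} [TopologicalSpace X] [CompletelyRegularSpace X] {x : X}
    {P : X → Prop} (hP : ∀ᶠ y in 𝓝 x, P y) {a b : ℝ} (hab : a ≤ b) :
    ∃ φ : X →ᵇ ℝ, φ x = b ∧ (∀ y, φ y ≤ b) ∧ ∀ y, P y ∨ φ y = a := by
  obtain ⟨V, hVP, hV, hxV⟩ := eventually_nhds_iff.1 hP
  obtain ⟨f, hf, hfx, hfV⟩ := CompletelyRegularSpace.completely_regular_isOpen x V hV hxV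
  let g : X →ᵇ ℝ := BoundedContinuousFunction.mkOfBound ⟨fun y => f y, by fun_prop⟩ 1 fun y z =>
    Real.dist_le_of_mem_Icc_01 (f y).2 (f z).2
  refine ⟨BoundedContinuousFunction.const X b - (b - a) • g, ?_, fun y => ?_, fun y => ?_⟩
  · simp [g, hfx]
  · simpa [g] using mul_nonneg (sub_nonneg.2 hab) (f y).2.1
  · by_cases hy : y ∈ V
    · exact Or.inl (hVP y hy)
    · right
      simp [g, show f y = 1 from hfV hy]

variable {H : Cone X₁ × Cone X₂ → ℝ≥0∞} {x₁ : X₁} {x₂ : X₂} {p q ε : ℝ}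

lemma eventually_linear_le_secF (hhom : RadiallyHomogeneous H) (hlsc : LowerSemicontinuous H)
    (hε : 0 < ε) (hle : ∀ s : ℝ≥0 × ℝ≥0, ENNReal.ofReal (p * s.1 + q * s.2) ≤ secF H x₁ x₂ s) :
    ∀ᶠ y in 𝓝 (x₁, x₂), ∀ s : ℝ≥0 × ℝ≥0,
      ENNReal.ofReal ((p - ε) * s.1 + (q - ε) * s.2) ≤ secF H y.1 y.2 s := by
  have hmk : Continuous fun z : (X₁ × X₂) × unitInterval =>
      (Cone.mk X₁ z.1.1 (toNNReal z.2), Cone.mk X₂ z.1.2 (toNNReal (σ z.2))) := by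
    have hcont := unitInterval.toNNReal_continuous
    exact (Cone.continuous_mk.comp <| .prodMk (by fun_prop) (hcont.comp' (by fun_prop))).prodMk
      (Cone.continuous_mk.comp <| .prodMk (by fun_prop) (hcont.comp' (by fun_prop)))
  have hsegment : ∀ᶠ y in 𝓝 (x₁, x₂), ∀ θ ∈ (univ : Set unitInterval),
      ENNReal.ofReal (p * θ + q * σ θ - ε) ≤ secF H y.1 y.2 (toNNReal θ, toNNReal (σ θ)) :=
    isCompact_univ.eventually_forall_of_forall_eventually fun θ _ =>
      eventually_ofReal_sub_le (m := fun z : (X₁ × X₂) × unitInterval => p * z.2 + q * σ z.2)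
        (hlsc.comp hmk _) (by fun_prop) hε (hle (toNNReal θ, toNNReal (σ θ)))
  filter_upwards [hsegment] with y hy s
  obtain ⟨θ, h₁, h₂⟩ := exists_unitInterval_mul_add s.1 s.2
  rcases eq_or_ne (s.1 + s.2) 0 with h0 | h0
  · simp [add_eq_zero.1 h0]
  · have h₁' : (θ : ℝ) * (s.1 + s.2) = s.1 := congrArg NNReal.toReal h₁
    have h₂' : (σ θ : ℝ) * (s.1 + s.2) = s.2 := congrArg NNReal.toReal h₂
    calc ENNReal.ofReal ((p - ε) * s.1 + (q - ε) * s.2)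
        = (s.1 + s.2 : ℝ≥0) * ENNReal.ofReal (p * θ + q * σ θ - ε) := by
          rw [← ENNReal.ofReal_coe_nnreal, ← ENNReal.ofReal_mul (NNReal.coe_nonneg _)]
          congr 1
          push_cast
          linear_combination -p * h₁' - q * h₂'
      _ ≤ (s.1 + s.2 : ℝ≥0) * secF H y.1 y.2 (toNNReal θ, toNNReal (σ θ)) := by
          gcongr
          exact hy θ (mem_univ θ)
      _ = secF H y.1 y.2 s := by
          rw [secF, ← hhom y.1 y.2 _ _ _ (pos_iff_ne_zero.2 h0), mul_comm, h₁, mul_comm, h₂, secF]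

lemma exists_eventually_strip_le (hhom : RadiallyHomogeneous H) (hlsc : LowerSemicontinuous H)
    (hε : 0 < ε) (hle : ENNReal.ofReal q ≤ H (Cone.mk X₁ x₁ 0, Cone.mk X₂ x₂ 1)) :
    ∃ δ : ℝ≥0, 0 < δ ∧ ∀ᶠ y₂ in 𝓝 x₂, ∀ (y₁ : X₁) (s₁ s₂ : ℝ≥0), s₁ < δ * s₂ →
      ENNReal.ofReal ((q - ε) * s₂) ≤ H (Cone.mk X₁ y₁ s₁, Cone.mk X₂ y₂ s₂) := by
  have hnear := eventually_ofReal_sub_le (hlsc _) (continuousAt_const (y := q)) hε hle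
  rw [nhds_prod_eq] at hnear
  obtain ⟨P₁, hP₁, P₂, hP₂, hP⟩ := eventually_prod_iff.1 hnear
  obtain ⟨δ, hδ, hδP⟩ := Cone.exists_forall_radius_lt_mem (Cone.radius_mk x₁ 0) hP₁
  have hmk : Continuous fun y₂ : X₂ => Cone.mk X₂ y₂ 1 :=
    Cone.continuous_mk.comp (f := fun y₂ => (y₂, 1)) (by fun_prop)
  refine ⟨δ, hδ, ?_⟩
  filter_upwards [hmk.continuousAt.eventually hP₂] with y₂ hy₂ y₁ s₁ s₂ hs
  have hs₂ : 0 < s₂ := pos_of_mul_pos_right (pos_of_gt hs) hδ.le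
  calc ENNReal.ofReal ((q - ε) * s₂) = s₂ * ENNReal.ofReal (q - ε) := by
        rw [mul_comm, ENNReal.ofReal_mul s₂.coe_nonneg, ENNReal.ofReal_coe_nnreal]
    _ ≤ s₂ * H (Cone.mk X₁ y₁ (s₁ / s₂), Cone.mk X₂ y₂ 1) := by
        gcongr
        exact hP (hδP (Cone.mk X₁ y₁ (s₁ / s₂)) ((div_lt_iff₀ hs₂).2 hs)) hy₂
    _ = H (Cone.mk X₁ y₁ s₁, Cone.mk X₂ y₂ s₂) := by
        rw [← hhom y₁ y₂ _ _ s₂ hs₂, mul_div_cancel₀ _ hs₂.ne', mul_one]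

lemma eventually_penalized_le (hhom : RadiallyHomogeneous H) (hlsc : LowerSemicontinuous H)
    (hε : 0 < ε) (hle : ENNReal.ofReal q ≤ H (Cone.mk X₁ x₁ 0, Cone.mk X₂ x₂ 1)) :
    ∀ᶠ M : ℝ in atTop, ∀ᶠ y₂ in 𝓝 x₂, ∀ (y₁ : X₁) (s₁ s₂ : ℝ≥0),
      ENNReal.ofReal ((q - ε) * s₂ - M * s₁) ≤ H (Cone.mk X₁ y₁ s₁, Cone.mk X₂ y₂ s₂) := by
  obtain ⟨δ, hδ, hstrip⟩ := exists_eventually_strip_le hhom hlsc hε hle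
  filter_upwards [eventually_ge_atTop (|q - ε| / δ)] with M hM
  filter_upwards [hstrip] with y₂ hy₂ y₁ s₁ s₂
  have hM0 : 0 ≤ M := le_trans (by positivity) hM
  rcases lt_or_ge s₁ (δ * s₂) with hlt | hge
  · refine (ENNReal.ofReal_le_ofReal ?_).trans (hy₂ y₁ s₁ s₂ hlt)
    exact sub_le_self _ (by positivity)
  · have hbound : (q - ε) * s₂ ≤ M * s₁ := calc
      (q - ε) * s₂ ≤ |q - ε| * s₂ := by gcongr; exact le_abs_self _
      _ ≤ M * δ * s₂ := by
        gcongr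
        exact (div_le_iff₀ (by exact_mod_cast hδ)).1 hM
      _ ≤ M * s₁ := by
        rw [mul_assoc]
        gcongr
        exact_mod_cast hge
    rw [ENNReal.ofReal_of_nonpos (sub_nonpos.2 hbound)]
    exact zero_le

lemma exists_inPhi [CompletelyRegularSpace X₁] [CompletelyRegularSpace X₂]
    (hhom : RadiallyHomogeneous H) (hlsc : LowerSemicontinuous H) (hε : 0 < ε)
    (hle : ∀ s : ℝ≥0 × ℝ≥0, ENNReal.ofReal (p * s.1 + q * s.2) ≤ secF H x₁ x₂ s) :
    ∃ (φ₁ : X₁ →ᵇ ℝ) (φ₂ : X₂ →ᵇ ℝ), InPhi H φ₁ φ₂ ∧ φ₁ x₁ = p - ε ∧ φ₂ x₂ = q - ε := by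
  have hnear := eventually_linear_le_secF hhom hlsc hε hle
  rw [nhds_prod_eq] at hnear
  obtain ⟨P₁, hP₁, P₂, hP₂, hP⟩ := eventually_prod_iff.1 hnear
  have hhom_swap : RadiallyHomogeneous (H ∘ Prod.swap : Cone X₂ × Cone X₁ → ℝ≥0∞) :=
    fun y₂ y₁ r₂ r₁ => hhom y₁ y₂ r₁ r₂
  have hpen₁ := eventually_penalized_le (x₁ := x₂) (x₂ := x₁) (q := p) hhom_swap
    (hlsc.comp continuous_swap) hε (by simpa [secF] using hle (1, 0))
  have hpen₂ := eventually_penalized_le (x₁ := x₁) (x₂ := x₂) (q := q) hhom hlsc hε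
    (by simpa [secF] using hle (0, 1))
  obtain ⟨M, hM₁, hM₂, hM0, hMp, hMq⟩ := (hpen₁.and <| hpen₂.and <| (eventually_ge_atTop 0).and <|
    (eventually_ge_atTop (-(p - ε))).and (eventually_ge_atTop (-(q - ε)))).exists
  obtain ⟨φ₁, hx₁, hle₁, hor₁⟩ := exists_continuous_bump (hP₁.and hM₁) (neg_le.1 hMp)
  obtain ⟨φ₂, hx₂, hle₂, hor₂⟩ := exists_continuous_bump (hP₂.and hM₂) (neg_le.1 hMq)
  refine ⟨φ₁, φ₂, fun y₁ y₂ s₁ s₂ => ?_, hx₁, hx₂⟩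
  have hφ₁ : φ₁ y₁ * s₁ ≤ (p - ε) * s₁ := by gcongr; exact hle₁ y₁
  have hφ₂ : φ₂ y₂ * s₂ ≤ (q - ε) * s₂ := by gcongr; exact hle₂ y₂
  rcases hor₁ y₁ with ⟨hPy₁, hMy₁⟩ | hy₁ <;> rcases hor₂ y₂ with ⟨hPy₂, hMy₂⟩ | hy₂
  · exact (ENNReal.ofReal_le_ofReal (add_le_add hφ₁ hφ₂)).trans (hP hPy₁ hPy₂ (s₁, s₂))
  · exact (ENNReal.ofReal_le_ofReal (by rw [hy₂]; linarith)).trans (hMy₁ y₂ s₂ s₁)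
  · exact (ENNReal.ofReal_le_ofReal (by rw [hy₁]; linarith)).trans (hMy₂ y₁ s₁ s₂)
  · rw [hy₁, hy₂, ← mul_add, ENNReal.ofReal_of_nonpos
      (mul_nonpos_of_nonpos_of_nonneg (neg_nonpos.2 hM0) (by positivity))]
    exact zero_le

lemma convexHullFn_secF_eq_iSup_inPhi [CompletelyRegularSpace X₁] [CompletelyRegularSpace X₂]
    (hproper : ProperCost H) (hhom : RadiallyHomogeneous H) (hlsc : LowerSemicontinuous H)
    (r₁ r₂ : ℝ≥0) :
    convexHullFn (secF H x₁ x₂) (r₁, r₂) =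
      ⨆ (φ₁ : X₁ →ᵇ ℝ) (φ₂ : X₂ →ᵇ ℝ) (_ : InPhi H φ₁ φ₂),
        ENNReal.ofReal (φ₁ x₁ * r₁ + φ₂ x₂ * r₂) := by
  refine le_antisymm (ENNReal.le_of_forall_nnreal_lt fun τ hτ => ?_)
    (iSup_le fun φ₁ => iSup₂_le fun φ₂ hφ => ?_)
  · have hpos := isPosHomogeneous_secF hproper hhom hlsc x₁ x₂
    have hlsc_inf : LowerSemicontinuous (infConv (secF H x₁ x₂) (secF H x₁ x₂)) :=
      secF_splitCost (H := H) x₁ x₂ ▸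
        (lowerSemicontinuous_splitCost hlsc).comp (continuous_mk_mk x₁ x₂)
    rw [convexHullFn_eq_infConv_self hpos] at hτ
    obtain ⟨p, q, hle, hlt⟩ :=
      (isSublinear_infConv_self hpos).exists_linear_le_nnreal_prod hlsc_inf hτ
    obtain ⟨ε, hε, hgap⟩ := exists_pos_mul_lt (sub_pos.2 hlt) (r₁ + r₂ : ℝ)
    obtain ⟨φ₁, φ₂, hφ, h₁, h₂⟩ := exists_inPhi hhom hlsc hε fun s =>
      (hle s).trans (infConv_self_le hpos s)
    refine le_iSup_of_le φ₁ (le_iSup₂_of_le φ₂ hφ ?_)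
    rw [h₁, h₂, ← ENNReal.ofReal_coe_nnreal]
    exact ENNReal.ofReal_le_ofReal (by linarith)
  · exact (isSublinear_ofReal _ _).convexENN.le_convexHullFn (fun s => hφ x₁ x₂ s.1 s.2) (r₁, r₂)

end Potentials

theorem convexification_identities_general
    [CompletelyRegularSpace X₁] [CompletelyRegularSpace X₂]
    [MeasurableSpace X₁] [BorelSpace X₁] [MeasurableSpace X₂] [BorelSpace X₂]
    [Nonempty X₁] [Nonempty X₂]
    (H : Cone X₁ × Cone X₂ → ℝ≥0∞) (hproper : ProperCost H)
    (hhom : RadiallyHomogeneous H) (hlsc : LowerSemicontinuous H) :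
    (∀ (x₁ : X₁) (x₂ : X₂) (r₁ r₂ : ℝ≥0),
      lscHull (radialConvexification H) (Cone.mk X₁ x₁ r₁, Cone.mk X₂ x₂ r₂) =
        lscConvexHull (secF H x₁ x₂) (r₁, r₂) ∧
      lscHull (radialConvexification H) (Cone.mk X₁ x₁ r₁, Cone.mk X₂ x₂ r₂) =
        ⨆ (φ₁ : X₁ →ᵇ ℝ) (φ₂ : X₂ →ᵇ ℝ) (_ : InPhi H φ₁ φ₂),
          ENNReal.ofReal (φ₁ x₁ * r₁ + φ₂ x₂ * r₂)) ∧
    (∀ (μ₁ : FiniteMeasure X₁) (μ₂ : FiniteMeasure X₂),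
      UH H (μ₁ : Measure X₁) (μ₂ : Measure X₂) =
        UH (lscHull (radialConvexification H)) (μ₁ : Measure X₁) (μ₂ : Measure X₂)) ∧
    lscConvexHull (singCost H) =
      lscConvexHull (singCost (lscHull (radialConvexification H))) := by
  have hco := lowerSemicontinuous_radialConvexification hproper hhom hlsc
  have hsec := secF_radialConvexification hproper hhom hlsc
  rw [lscHull_eq_self hco]
  refine ⟨fun x₁ x₂ r₁ r₂ => ⟨?_, ?_⟩,
    fun μ₁ μ₂ => (UH_radialConvexification hproper hhom hlsc _ _).symm,
    lscConvexHull_singCost_radialConvexification.symm⟩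
  · rw [lscConvexHull_eq_convexHullFn (hsec x₁ x₂ ▸ hco.comp (continuous_mk_mk x₁ x₂)), ← hsec]
    rfl
  · exact (congrFun (hsec x₁ x₂) (r₁, r₂)).trans
      (convexHullFn_secF_eq_iSup_inPhi hproper hhom hlsc r₁ r₂)

/-- The slice-by-slice lsc convex envelope `co* H` coincides with the
global envelope `cl co H` (radial convexification followed by lsc envelope on the cone), and
both equal `sup {φ₁(x₁) r₁ + φ₂(x₂) r₂ : (φ₁,φ₂) ∈ Φ_H}`; moreover `U_H = U_{cl co H}` and
`cl co F_H = cl co F_{cl co H}`. -/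
theorem convexification_identities
    [T2Space X₁] [T2Space X₂] [CompletelyRegularSpace X₁] [CompletelyRegularSpace X₂]
    [MeasurableSpace X₁] [BorelSpace X₁] [MeasurableSpace X₂] [BorelSpace X₂]
    [Nonempty X₁] [Nonempty X₂]
    (H : Cone X₁ × Cone X₂ → ℝ≥0∞) (hproper : ProperCost H)
    (hhom : RadiallyHomogeneous H) (hlsc : LowerSemicontinuous H) :
    (∀ (x₁ : X₁) (x₂ : X₂) (r₁ r₂ : ℝ≥0),
      lscHull (radialConvexification H) (Cone.mk X₁ x₁ r₁, Cone.mk X₂ x₂ r₂) =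
        lscConvexHull (secF H x₁ x₂) (r₁, r₂) ∧
      lscHull (radialConvexification H) (Cone.mk X₁ x₁ r₁, Cone.mk X₂ x₂ r₂) =
        ⨆ (φ₁ : X₁ →ᵇ ℝ) (φ₂ : X₂ →ᵇ ℝ) (_ : InPhi H φ₁ φ₂),
          ENNReal.ofReal (φ₁ x₁ * r₁ + φ₂ x₂ * r₂)) ∧
    (∀ (μ₁ : FiniteMeasure X₁) (μ₂ : FiniteMeasure X₂),
      UH H (μ₁ : Measure X₁) (μ₂ : Measure X₂) =
        UH (lscHull (radialConvexification H)) (μ₁ : Measure X₁) (μ₂ : Measure X₂)) ∧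
    lscConvexHull (singCost H) =
      lscConvexHull (singCost (lscHull (radialConvexification H))) :=
  convexification_identities_general H hproper hhom hlsc

end UOT
end
end

section
/- Monge equals Kantorovich for unbalanced transport with diffuse first marginal: let X₁, X₂ be Polish, H: C[X₁]×C[X₂] → [0,∞] proper, radially 1-homogeneous and continuous, μ_i ∈ M+(X_i) with μ₁ atomless and μ₁(X₁)>0. Then U_H(μ₁,μ₂) = inf{∫ H([x,1],[T(x),g(x)]) dμ₁(x) : (T,g): X₁ → X₂×[0,∞) Borel, T_♯(g·μ₁) = μ₂}. -/
open MeasureTheory Topology Filter Set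
open scoped NNReal ENNReal BoundedContinuousFunction

noncomputable section

namespace UOT

/-! A transport-growth map `(T, g)` is a homogeneous coupling carried by the points
`([x, 1], [T x, g x])`, so only `inf ≤ U_H` is at stake. Let `β` be a coupling in polar coordinates.

Mass of `β` over the vertex of the first cone does not contribute to the first marginal, but it
does to the second and to the cost. By continuity of `H`, the radii of the remaining mass can be
lowered by a small fraction at a small cost, and the first marginal freed in this way can be handed
to the mass over the vertex, as a small positive radius. In the resulting coupling the first radius
never vanishes, and homogeneity of `H` normalises it to `1`. What remains is an ordinary transport
plan between `X₁` and `X₂ × ℝ≥0` whose first marginal is the diffuse measure `μ₁`.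

For such plans and continuous costs, maps are as good as plans (Pratelli): the plan is cut into
countably many pieces living on products of open sets on which the cost oscillates by less than `ε`,
the first marginals of the pieces are made mutually singular by splitting `μ₁`, and each piece is
replaced by any map with the same marginals, which exists because atomless standard Borel measures
of equal mass are related by a map. -/

section Atomless

open ProbabilityTheory unitInterval

lemma continuous_cdf (m : Measure ℝ) [IsProbabilityMeasure m] [NullSingletonClass m] :
    Continuous (cdf m) := by
  rw [continuous_iff_continuousAt]
  intro x
  rw [(monotone_cdf m).continuousAt_iff_leftLim_eq_rightLim, StieltjesFunction.rightLim_eq]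
  have h : (cdf m).measure {x} = 0 := by rw [measure_cdf, measure_singleton]
  rw [StieltjesFunction.measure_singleton, ENNReal.ofReal_eq_zero] at h
  exact le_antisymm ((monotone_cdf m).leftLim_le le_rfl) (by linarith)

lemma exists_cdf_eq (m : Measure ℝ) [IsProbabilityMeasure m] [NullSingletonClass m] {s : ℝ}
    (h0 : 0 < s) (h1 : s < 1) : ∃ a, cdf m a = s := by
  obtain ⟨a, ha⟩ := ((tendsto_cdf_atBot m).eventually (gt_mem_nhds h0)).exists
  obtain ⟨b, hb⟩ := ((tendsto_cdf_atTop m).eventually (lt_mem_nhds h1)).exists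
  exact mem_range_of_exists_le_of_exists_ge (continuous_cdf m) ⟨a, ha.le⟩ ⟨b, hb.le⟩

lemma measureReal_cdf_le (m : Measure ℝ) [IsProbabilityMeasure m] [NullSingletonClass m] {t : ℝ}
    (h0 : 0 ≤ t) (h1 : t ≤ 1) : m.real {x | cdf m x ≤ t} = t := by
  apply le_antisymm
  · refine le_of_forall_gt_imp_ge_of_dense fun s hs => ?_
    rcases le_or_gt 1 s with hs1 | hs1
    · exact measureReal_le_one.trans hs1
    obtain ⟨a, rfl⟩ := exists_cdf_eq m (h0.trans_lt hs) hs1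
    refine (measureReal_mono fun x hx => ?_).trans_eq (cdf_eq_real m a).symm
    exact ((monotone_cdf m).reflect_lt (lt_of_le_of_lt hx hs)).le
  · refine le_of_forall_lt_imp_le_of_dense fun s hs => ?_
    rcases le_or_gt s 0 with hs0 | hs0
    · exact hs0.trans measureReal_nonneg
    obtain ⟨a, rfl⟩ := exists_cdf_eq m hs0 (hs.trans_le h1)
    exact (cdf_eq_real m a).trans_le
      (measureReal_mono fun x hx => (monotone_cdf m hx).trans hs.le)

variable {X : Type*} [MeasurableSpace X] [StandardBorelSpace X]

lemma exists_map_eq_smul_volume (ρ : Measure X) [IsFiniteMeasure ρ] [NullSingletonClass ρ] :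
    ∃ U : X → I, Measurable U ∧ ρ.map U = ρ univ • (volume : Measure I) := by
  rcases eq_or_ne ρ 0 with rfl | hρ
  · exact ⟨fun _ => 0, measurable_const, by simp⟩
  have : NeZero ρ := ⟨hρ⟩
  obtain ⟨θ, hθ⟩ := exists_measurableEmbedding_real X
  set P : Measure X := (ρ univ)⁻¹ • ρ with hP
  set m : Measure ℝ := P.map θ with hm
  have : IsProbabilityMeasure P := ⟨by simp [hP]⟩
  have : IsProbabilityMeasure m := Measure.isProbabilityMeasure_map hθ.measurable.aemeasurable
  have : NullSingletonClass m := ⟨fun x => by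
    rw [hm, hθ.map_apply, hP, Measure.smul_apply,
      (subsingleton_singleton.preimage hθ.injective).measure_zero, smul_zero]⟩
  let F : ℝ → I := fun x => ⟨cdf m x, cdf_nonneg m x, cdf_le_one m x⟩
  have hF : Measurable F := (monotone_cdf m).measurable.subtype_mk
  have hmap : m.map F = volume := by
    have : IsProbabilityMeasure (m.map F) := Measure.isProbabilityMeasure_map hF.aemeasurable
    refine Measure.ext_of_Iic _ _ fun t => ?_
    rw [Measure.map_apply hF measurableSet_Iic, unitInterval.volume_Iic,
      ← measureReal_cdf_le m t.2.1 t.2.2, ofReal_measureReal]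
    rfl
  have hρP : ρ = ρ univ • P := by
    rw [hP, smul_smul, ENNReal.mul_inv_cancel (NeZero.ne _) (measure_ne_top ρ _), one_smul]
  refine ⟨F ∘ θ, hF.comp hθ.measurable, ?_⟩
  conv_lhs => rw [hρP]
  rw [Measure.map_smul, ← Measure.map_map hF hθ.measurable, ← hm, hmap]

lemma exists_measurable_subset_measure_eq (ρ : Measure X) [IsFiniteMeasure ρ]
    [NullSingletonClass ρ] {S : Set X} (hS : MeasurableSet S) {v : ℝ≥0∞} (hv : v ≤ ρ S) :
    ∃ Z ⊆ S, MeasurableSet Z ∧ ρ Z = v := by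
  rcases eq_or_ne (ρ S) 0 with h0 | h0
  · exact ⟨∅, empty_subset _, .empty, by simpa [h0, eq_comm] using hv⟩
  obtain ⟨U, hU, hmap⟩ := exists_map_eq_smul_volume (ρ.restrict S)
  have hq : v / ρ S ≤ 1 := ENNReal.div_le_of_le_mul (by simpa using hv)
  let t : I := ⟨(v / ρ S).toReal, ENNReal.toReal_nonneg,
    by simpa using ENNReal.toReal_mono ENNReal.one_ne_top hq⟩
  refine ⟨S ∩ U ⁻¹' Iic t, inter_subset_left, hS.inter (hU measurableSet_Iic), ?_⟩
  calc ρ (S ∩ U ⁻¹' Iic t) = (ρ.restrict S).map U (Iic t) := by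
        rw [Measure.map_apply hU measurableSet_Iic,
          Measure.restrict_apply (hU measurableSet_Iic), inter_comm]
    _ = ρ S * (v / ρ S) := by
        rw [hmap, Measure.smul_apply, unitInterval.volume_Iic, Measure.restrict_apply_univ,
          smul_eq_mul, ENNReal.ofReal_toReal (ne_top_of_le_ne_top ENNReal.one_ne_top hq)]
    _ = v := ENNReal.mul_div_cancel h0 (measure_ne_top ρ S)

lemma exists_measurable_map_eq {Y : Type*} [MeasurableSpace Y] [StandardBorelSpace Y]
    [Nonempty Y] (ρ : Measure X) [IsFiniteMeasure ρ] [NullSingletonClass ρ] (ν : Measure Y)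
    (h : ν univ = ρ univ) : ∃ S : X → Y, Measurable S ∧ ρ.map S = ν := by
  rcases eq_or_ne (ρ univ) 0 with h0 | h0
  · refine ⟨fun _ => Classical.arbitrary Y, measurable_const, ?_⟩
    rw [Measure.measure_univ_eq_zero.1 h0, Measure.measure_univ_eq_zero.1 (h.trans h0),
      Measure.map_zero]
  have htop := measure_ne_top ρ univ
  obtain ⟨U, hU, hmap⟩ := exists_map_eq_smul_volume ρ
  have : IsProbabilityMeasure ((ρ univ)⁻¹ • ν) := ⟨by simp [h, ENNReal.inv_mul_cancel h0 htop]⟩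
  obtain ⟨f, hf, hfmap⟩ := Measure.exists_measurable_map_eq ((ρ univ)⁻¹ • ν)
  refine ⟨f ∘ U, hf.comp hU, ?_⟩
  rw [← Measure.map_map hf hU, hmap, Measure.map_smul, hfmap, smul_smul,
    ENNReal.mul_inv_cancel h0 htop, one_smul]

end Atomless

section Partition

open Function

variable {X : Type*} [MeasurableSpace X]

lemma exists_measurable_subset_measure_sdiff_eq [StandardBorelSpace X] {ι : Type*} [Countable ι]
    [MeasurableSpace ι] [MeasurableSingletonClass ι] {ρ σ : Measure X} [IsFiniteMeasure (ρ + σ)]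
    [NullSingletonClass (ρ + σ)] {A : Set X} (hA : MeasurableSet A) (hσ : σ Aᶜ = 0) {τ : X → ι}
    (hτ : Measurable τ) :
    ∃ Z ⊆ A, MeasurableSet Z ∧ (ρ + σ) Z = σ univ ∧
      ∀ i, (ρ + σ) (τ ⁻¹' {i} \ Z) = ρ (τ ⁻¹' {i}) := by
  have hcell (i : ι) : MeasurableSet (τ ⁻¹' {i}) := hτ (measurableSet_singleton i)
  have hle (i : ι) : σ (τ ⁻¹' {i}) ≤ (ρ + σ) (τ ⁻¹' {i} ∩ A) := by
    rw [Measure.add_apply, measure_inter_conull hσ]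
    exact le_add_self
  choose Z hZsub hZ hZσ using
    fun i => exists_measurable_subset_measure_eq (ρ + σ) ((hcell i).inter hA) (hle i)
  have hdisj : Pairwise (Disjoint on Z) := fun i j hij =>
    ((pairwise_disjoint_fiber τ hij).mono ((hZsub i).trans inter_subset_left)
      ((hZsub j).trans inter_subset_left))
  refine ⟨⋃ i, Z i, iUnion_subset fun i => (hZsub i).trans inter_subset_right, .iUnion hZ,
    ?_, fun i => ?_⟩
  · rw [measure_iUnion hdisj hZ]
    simp_rw [hZσ]
    rw [← measure_iUnion (pairwise_disjoint_fiber τ) hcell, ← preimage_iUnion,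
      iUnion_of_singleton, preimage_univ]
  · have hdiff : τ ⁻¹' {i} \ ⋃ j, Z j = τ ⁻¹' {i} \ Z i := by
      refine subset_antisymm (sdiff_subset_sdiff_right (subset_iUnion Z i)) fun x hx => ⟨hx.1, ?_⟩
      rintro hxZ
      obtain ⟨j, hj⟩ := mem_iUnion.1 hxZ
      obtain rfl : i = j := hx.1.symm.trans (hZsub j hj).1
      exact hx.2 hj
    have hσ_top : σ (τ ⁻¹' {i}) ≠ ⊤ := hZσ i ▸ measure_ne_top _ _
    rw [hdiff, measure_sdiff ((hZsub i).trans inter_subset_left) (hZ i).nullMeasurableSet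
      (measure_ne_top _ _), hZσ, Measure.add_apply, ENNReal.add_sub_cancel_right hσ_top]

/-- A stage of the construction of disjoint sets `W i ⊆ A i` of mass `α i univ`: the points
labelled `i` by `τ` are those currently placed in `W i`, the points labelled `⊤` are in none, and
there is enough room for the measures `α i` with `i < n`. The mass is counted with the sum of these
`n` measures only, so that every new measure adds room to the sets already built. -/
structure IsLabelling (α : ℕ → Measure X) (A : ℕ → Set X) (n : ℕ) (τ : X → ℕ∞) : Prop where
  measurable : Measurable τ
  subset : ∀ i : ℕ, τ ⁻¹' {↑i} ⊆ A i
  le : ∀ i < n, α i univ ≤ (∑ j ∈ Finset.range n, α j) (τ ⁻¹' {↑i})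

variable {α : ℕ → Measure X} {A : ℕ → Set X}

lemma isLabelling_zero : IsLabelling α A 0 fun _ => ⊤ where
  measurable := measurable_const
  subset := by simp
  le := by simp

lemma finset_sum_le_measure_sum {ι : Type*} (α : ι → Measure X) (s : Finset ι) :
    ∑ j ∈ s, α j ≤ Measure.sum α :=
  Measure.le_iff.2 fun B hB => by
    rw [Measure.finsetSum_apply, Measure.sum_apply _ hB]
    exact ENNReal.sum_le_tsum s

variable [StandardBorelSpace X] [IsFiniteMeasure (Measure.sum α)]
  [NullSingletonClass (Measure.sum α)]

lemma IsLabelling.exists_succ (hA : ∀ i, MeasurableSet (A i)) (hα : ∀ i, α i (A i)ᶜ = 0) {n : ℕ}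
    {τ : X → ℕ∞} (hτ : IsLabelling α A n τ) :
    ∃ τ', IsLabelling α A (n + 1) τ' ∧ ∀ i < n, τ' ⁻¹' {↑i} ⊆ τ ⁻¹' {↑i} := by
  classical
  set s := ∑ j ∈ Finset.range n, α j with hs
  have hsucc : s + α n = ∑ j ∈ Finset.range (n + 1), α j := (Finset.sum_range_succ α n).symm
  have hle : s + α n ≤ Measure.sum α := hsucc ▸ finset_sum_le_measure_sum α _
  have : IsFiniteMeasure (s + α n) := isFiniteMeasure_of_le _ hle
  have : NullSingletonClass (s + α n) :=
    ⟨fun x => le_antisymm ((hle _).trans (measure_singleton x).le) zero_le⟩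
  obtain ⟨Z, hZA, hZ, hZn, hZτ⟩ :=
    exists_measurable_subset_measure_sdiff_eq (ρ := s) (hA n) (hα n) hτ.measurable
  have hne {i : ℕ} (hi : i ≠ n) : Z.piecewise (fun _ => ↑n) τ ⁻¹' {↑i} = τ ⁻¹' {↑i} \ Z := by
    ext x
    by_cases hx : x ∈ Z <;> simp [hx, hi.symm]
  have hn : Z.piecewise (fun _ => ↑n) τ ⁻¹' {↑n} = Z ∪ τ ⁻¹' {↑n} := by
    ext x
    by_cases hx : x ∈ Z <;> simp [hx]
  refine ⟨Z.piecewise (fun _ => ↑n) τ, ⟨measurable_const.piecewise hZ hτ.measurable, fun i => ?_,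
    fun i hi => ?_⟩, fun i hi => (hne hi.ne).trans_subset sdiff_subset⟩
  · rcases eq_or_ne i n with rfl | hi
    · exact hn.trans_subset (union_subset hZA (hτ.subset i))
    · exact (hne hi).trans_subset (sdiff_subset.trans (hτ.subset i))
  · rw [← hsucc]
    rcases (Nat.lt_succ_iff.1 hi).eq_or_lt with rfl | hi
    · rw [hn, ← hZn]
      exact measure_mono subset_union_left
    · rw [hne hi.ne, hZτ]
      exact hτ.le i hi

lemma exists_seq_isLabelling (hA : ∀ i, MeasurableSet (A i)) (hα : ∀ i, α i (A i)ᶜ = 0) :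
    ∃ τ : ℕ → X → ℕ∞, (∀ n, IsLabelling α A n (τ n)) ∧
      ∀ n, ∀ i < n, τ (n + 1) ⁻¹' {↑i} ⊆ τ n ⁻¹' {↑i} := by
  choose! next hnext hsub using
    fun n τ (hτ : IsLabelling α A n τ) => hτ.exists_succ hA hα
  let τ : ℕ → X → ℕ∞ := Nat.rec (fun _ => ⊤) next
  have hτ (n : ℕ) : IsLabelling α A n (τ n) := by
    induction n with
    | zero => exact isLabelling_zero
    | succ n ih => exact hnext n _ ih
  exact ⟨τ, hτ, fun n => hsub n _ (hτ n)⟩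

lemma exists_pairwise_disjoint_le_measure (hA : ∀ i, MeasurableSet (A i))
    (hα : ∀ i, α i (A i)ᶜ = 0) :
    ∃ W : ℕ → Set X, (∀ i, MeasurableSet (W i)) ∧ Pairwise (Disjoint on W) ∧ (∀ i, W i ⊆ A i) ∧
      ∀ i, α i univ ≤ Measure.sum α (W i) := by
  obtain ⟨τ, hτ, hsub⟩ := exists_seq_isLabelling hA hα
  have hcell (i k : ℕ) : MeasurableSet (τ (i + 1 + k) ⁻¹' {(i : ℕ∞)}) :=
    (hτ _).measurable (measurableSet_singleton _)
  refine ⟨fun i => ⋂ k, τ (i + 1 + k) ⁻¹' {↑i}, fun i => .iInter (hcell i), fun i j hij => ?_,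
    fun i => (iInter_subset _ 0).trans ((hτ _).subset i), fun i => ?_⟩
  · refine disjoint_left.2 fun x hi hj => hij ?_
    have hi' : τ (i + 1 + j) x = i := mem_iInter.1 hi j
    have hj' : τ (j + 1 + i) x = j := mem_iInter.1 hj i
    rw [show i + 1 + j = j + 1 + i by ring, hj'] at hi'
    exact_mod_cast hi'.symm
  · have hanti : Antitone fun k => τ (i + 1 + k) ⁻¹' {(i : ℕ∞)} :=
      antitone_nat_of_succ_le fun k => hsub _ i (Nat.lt_add_right k i.lt_succ_self)
    refine ge_of_tendsto (tendsto_measure_iInter_atTop (fun k => (hcell i k).nullMeasurableSet)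
      hanti ⟨0, measure_ne_top _ _⟩) (Eventually.of_forall fun k => ?_)
    exact ((hτ _).le i (Nat.lt_add_right k i.lt_succ_self)).trans (finset_sum_le_measure_sum α _ _)

lemma exists_pairwise_disjoint_measure_eq (hA : ∀ i, MeasurableSet (A i))
    (hα : ∀ i, α i (A i)ᶜ = 0) :
    ∃ W : ℕ → Set X, (∀ i, MeasurableSet (W i)) ∧ Pairwise (Disjoint on W) ∧ (∀ i, W i ⊆ A i) ∧
      ∀ i, Measure.sum α (W i) = α i univ := by
  obtain ⟨W, hW, hdisj, hWA, hle⟩ := exists_pairwise_disjoint_le_measure hA hα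
  refine ⟨W, hW, hdisj, hWA, fun i => le_antisymm (not_lt.1 fun hlt => ?_) (hle i)⟩
  have hsum : ∑' i, α i univ = Measure.sum α univ := (Measure.sum_apply _ .univ).symm
  refine (ENNReal.tsum_lt_tsum (hsum ▸ measure_ne_top _ _) hle hlt).not_ge ?_
  rw [hsum, ← measure_iUnion hdisj hW]
  exact measure_mono (subset_univ _)

end Partition

section Pratelli

variable {X Y : Type*}

lemma exists_isOpen_prod_le_add [TopologicalSpace X] [TopologicalSpace Y] {c : X × Y → ℝ≥0∞}
    (hc : Continuous c) {ε : ℝ≥0∞} (hε : ε ≠ 0) {p : X × Y} (hp : c p ≠ ⊤) :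
    ∃ (U : Set X) (V : Set Y), IsOpen U ∧ IsOpen V ∧ p ∈ U ×ˢ V ∧
      ∀ q ∈ U ×ˢ V, ∀ q' ∈ U ×ˢ V, c q ≤ c q' + ε := by
  have hnhds : c ⁻¹' Icc (c p - ε / 2) (c p + ε / 2) ∈ 𝓝 p :=
    hc.continuousAt (ENNReal.Icc_mem_nhds hp (by simpa using hε))
  obtain ⟨U, V, hU, hpU, hV, hpV, hUV⟩ := mem_nhds_prod_iff'.1 hnhds
  refine ⟨U, V, hU, hV, ⟨hpU, hpV⟩, fun q hq q' hq' => ?_⟩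
  calc c q ≤ c p + ε / 2 := (hUV hq).2
    _ ≤ c q' + ε / 2 + ε / 2 := by gcongr; exact tsub_le_iff_right.1 (hUV hq').1
    _ = c q' + ε := by rw [add_assoc, ENNReal.add_halves]

lemma exists_seq_isOpen_prod_le_add [TopologicalSpace X] [TopologicalSpace Y]
    [SecondCountableTopology X] [SecondCountableTopology Y] {c : X × Y → ℝ≥0∞}
    (hc : Continuous c) {ε : ℝ≥0∞} (hε : ε ≠ 0) :
    ∃ (A : ℕ → Set X) (B : ℕ → Set Y), (∀ i, IsOpen (A i)) ∧ (∀ i, IsOpen (B i)) ∧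
      {p | c p ≠ ⊤} ⊆ ⋃ i, A i ×ˢ B i ∧
      ∀ i, ∀ p ∈ A i ×ˢ B i, ∀ q ∈ A i ×ˢ B i, c p ≤ c q + ε := by
  choose U V hU hV hmem hle using
    fun p : {p // c p ≠ ⊤} => exists_isOpen_prod_le_add hc hε p.2
  rcases isEmpty_or_nonempty {p // c p ≠ ⊤} with hempty | hne
  · exact ⟨fun _ => ∅, fun _ => ∅, by simp, by simp, fun p hp => (hempty.false ⟨p, hp⟩).elim,
      by simp⟩
  obtain ⟨T, hT, hTU⟩ := TopologicalSpace.isOpen_iUnion_countable (fun p => U p ×ˢ V p)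
    fun p => (hU p).prod (hV p)
  obtain ⟨e, he⟩ := countable_iff_exists_subset_range.1 hT
  refine ⟨U ∘ e, V ∘ e, fun i => hU _, fun i => hV _, fun p hp => ?_, fun i => hle _⟩
  have hpT : p ∈ ⋃ q ∈ T, U q ×ˢ V q := hTU ▸ mem_iUnion.2 ⟨⟨p, hp⟩, hmem ⟨p, hp⟩⟩
  obtain ⟨q, hq, hpq⟩ := mem_iUnion₂.1 hpT
  obtain ⟨i, rfl⟩ := he hq
  exact mem_iUnion.2 ⟨i, hpq⟩

lemma lintegral_le_lintegral_add_of_le_add [MeasurableSpace X] {θ γ : Measure X} {R : Set X}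
    (hθ : ∀ᵐ p ∂θ, p ∈ R) (hγ : ∀ᵐ p ∂γ, p ∈ R) (hmass : θ univ = γ univ) {c : X → ℝ≥0∞}
    {ε : ℝ≥0∞} (hc : ∀ p ∈ R, ∀ q ∈ R, c p ≤ c q + ε) :
    ∫⁻ p, c p ∂θ ≤ ∫⁻ p, c p ∂γ + ε * γ univ := by
  set K := ⨅ q ∈ R, c q
  have hK : ∀ p ∈ R, c p ≤ K + ε := fun p hp =>
    tsub_le_iff_right.1 (le_iInf₂ fun q hq => tsub_le_iff_right.2 (hc p hp q hq))
  calc ∫⁻ p, c p ∂θ ≤ ∫⁻ _, K + ε ∂θ := lintegral_mono_ae (hθ.mono hK)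
    _ = ∫⁻ _, K ∂γ + ε * γ univ := by simp only [lintegral_const, hmass, add_mul]
    _ ≤ ∫⁻ p, c p ∂γ + ε * γ univ := by
        gcongr ?_ + _
        exact lintegral_mono_ae (hγ.mono fun p hp => iInf₂_le p hp)

variable [MeasurableSpace X] [StandardBorelSpace X] [MeasurableSpace Y] [StandardBorelSpace Y]
  [Nonempty Y]

lemma exists_measurable_map_restrict_eq_snd {γ : ℕ → Measure (X × Y)}
    [IsFiniteMeasure (Measure.sum γ)] [NullSingletonClass (Measure.sum γ).fst] {A : ℕ → Set X}
    (hA : ∀ i, MeasurableSet (A i)) (hγ : ∀ i, ∀ᵐ p ∂γ i, p.1 ∈ A i) :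
    ∃ (W : ℕ → Set X) (S : X → Y), (∀ i, MeasurableSet (W i)) ∧ (∀ i, W i ⊆ A i) ∧
      Measurable S ∧ Measure.sum (fun i => (Measure.sum γ).fst.restrict (W i)) =
        (Measure.sum γ).fst ∧
      ∀ i, ((Measure.sum γ).fst.restrict (W i)).map S = (γ i).snd := by
  set μ := (Measure.sum γ).fst
  have hsum : Measure.sum (fun i => (γ i).fst) = μ := (Measure.fst_sum _).symm
  have : IsFiniteMeasure (Measure.sum fun i => (γ i).fst) := hsum ▸ inferInstance
  have : NullSingletonClass (Measure.sum fun i => (γ i).fst) := hsum ▸ inferInstance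
  have hfstA (i : ℕ) : (γ i).fst (A i)ᶜ = 0 := by
    rw [Measure.fst_apply (hA i).compl]
    exact hγ i
  obtain ⟨W, hW, hdisj, hWA, hWγ⟩ := exists_pairwise_disjoint_measure_eq hA hfstA
  simp_rw [hsum, Measure.fst_univ] at hWγ
  have hcover : μ (⋃ i, W i) = μ univ := by
    rw [measure_iUnion hdisj hW, Measure.fst_univ, Measure.sum_apply _ .univ]
    exact tsum_congr hWγ
  have hS (i : ℕ) : ∃ S : X → Y, Measurable S ∧ (μ.restrict (W i)).map S = (γ i).snd :=
    exists_measurable_map_eq _ _ (by rw [Measure.restrict_apply_univ, hWγ, Measure.snd_univ])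
  choose S hSm hS using hS
  obtain ⟨S', hS'm, hS'⟩ := exists_measurable_piecewise W hW S hSm fun i j hij x hx =>
    ((hdisj hij).le_bot hx).elim
  refine ⟨W, S', hW, hWA, hS'm, ?_, fun i => ?_⟩
  · rw [← Measure.restrict_iUnion hdisj hW, Measure.restrict_eq_self_of_ae_mem]
    exact ae_eq_univ_iff_measure_eq (MeasurableSet.iUnion hW).nullMeasurableSet |>.2 hcover
      |>.mem_iff.mono (by simp)
  · rw [← hS, Measure.map_congr]
    filter_upwards [ae_restrict_mem (hW i)] using hS' i

lemma exists_measurable_map_eq_snd_of_sum {γ : ℕ → Measure (X × Y)}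
    [IsFiniteMeasure (Measure.sum γ)] [NullSingletonClass (Measure.sum γ).fst] {A : ℕ → Set X}
    {B : ℕ → Set Y} (hA : ∀ i, MeasurableSet (A i)) (hB : ∀ i, MeasurableSet (B i))
    (hγ : ∀ i, ∀ᵐ p ∂γ i, p ∈ A i ×ˢ B i) :
    ∃ S : X → Y, Measurable S ∧ (Measure.sum γ).fst.map S = (Measure.sum γ).snd ∧
      ∃ θ : ℕ → Measure (X × Y),
        (Measure.sum γ).fst.map (fun x => (x, S x)) = Measure.sum θ ∧
        ∀ i, θ i univ = γ i univ ∧ ∀ᵐ p ∂θ i, p ∈ A i ×ˢ B i := by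
  obtain ⟨W, S, hW, hWA, hS, hsum, hWS⟩ :=
    exists_measurable_map_restrict_eq_snd hA fun i => (hγ i).mono fun p hp => hp.1
  have hgraph : Measurable fun x => (x, S x) := measurable_id.prodMk hS
  refine ⟨S, hS, ?_, fun i => ((Measure.sum γ).fst.restrict (W i)).map fun x => (x, S x), ?_,
    fun i => ⟨?_, ?_⟩⟩
  · rw [← hsum, Measure.map_sum hS.aemeasurable, Measure.snd_sum]
    simp_rw [hWS]
  · rw [← Measure.map_sum hgraph.aemeasurable, hsum]
  · rw [Measure.map_apply hgraph .univ, ← Measure.snd_univ, ← hWS, Measure.map_apply hS .univ]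
    rfl
  · have hSB : ∀ᵐ x ∂(Measure.sum γ).fst.restrict (W i), S x ∈ B i := by
      refine ae_of_ae_map (p := (· ∈ B i)) hS.aemeasurable ?_
      rw [hWS]
      exact (ae_map_iff (p := (· ∈ B i)) measurable_snd.aemeasurable (hB i)).2
        ((hγ i).mono fun p hp => hp.2)
    refine (ae_map_iff (p := (· ∈ A i ×ˢ B i)) hgraph.aemeasurable ((hA i).prod (hB i))).2 ?_
    filter_upwards [ae_restrict_mem (hW i), hSB] with x hx hSx using ⟨hWA i hx, hSx⟩

lemma exists_measurable_map_eq_snd_lintegral_le [TopologicalSpace X] [TopologicalSpace Y]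
    [SecondCountableTopology X] [SecondCountableTopology Y] [BorelSpace X] [BorelSpace Y]
    {c : X × Y → ℝ≥0∞} (hc : Continuous c) (γ : Measure (X × Y)) [IsFiniteMeasure γ]
    [NullSingletonClass γ.fst] {ε : ℝ≥0∞} (hε : ε ≠ 0) :
    ∃ S : X → Y, Measurable S ∧ γ.fst.map S = γ.snd ∧
      ∫⁻ x, c (x, S x) ∂γ.fst ≤ ∫⁻ p, c p ∂γ + ε := by
  by_cases hfin : ∫⁻ p, c p ∂γ = ⊤
  · obtain ⟨S, hS, hmap⟩ :=
      exists_measurable_map_eq γ.fst γ.snd (by rw [Measure.fst_univ, Measure.snd_univ])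
    exact ⟨S, hS, hmap, by simp [hfin]⟩
  obtain ⟨δ, hδ0, hδ⟩ := ENNReal.exists_nnreal_pos_mul_lt (measure_ne_top γ univ) hε
  obtain ⟨A, B, hA, hB, hcover, hosc⟩ :=
    exists_seq_isOpen_prod_le_add hc (ENNReal.coe_ne_zero.2 hδ0.ne')
  let D : ℕ → Set (X × Y) := disjointed fun i => A i ×ˢ B i
  have hD (i : ℕ) : MeasurableSet (D i) :=
    .disjointed (fun i => (hA i).measurableSet.prod (hB i).measurableSet) i
  have hsum : Measure.sum (fun i => γ.restrict (D i)) = γ := by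
    rw [← Measure.restrict_iUnion (disjoint_disjointed _) hD, iUnion_disjointed,
      Measure.restrict_eq_self_of_ae_mem]
    filter_upwards [ae_lt_top hc.measurable hfin] with p hp using hcover hp.ne
  have hDAB (i : ℕ) : ∀ᵐ p ∂γ.restrict (D i), p ∈ A i ×ˢ B i :=
    (ae_restrict_mem (hD i)).mono fun p hp => disjointed_subset _ i hp
  have : IsFiniteMeasure (Measure.sum fun i => γ.restrict (D i)) := hsum.symm ▸ ‹_›
  have : NullSingletonClass (Measure.sum fun i => γ.restrict (D i)).fst := hsum.symm ▸ ‹_›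
  obtain ⟨S, hS, hmap, θ, hθ, hθγ⟩ := exists_measurable_map_eq_snd_of_sum
    (fun i => (hA i).measurableSet) (fun i => (hB i).measurableSet) hDAB
  rw [hsum] at hmap hθ
  refine ⟨S, hS, hmap, ?_⟩
  calc ∫⁻ x, c (x, S x) ∂γ.fst = ∑' i, ∫⁻ p, c p ∂θ i := by
        rw [← lintegral_sum_measure, ← hθ, lintegral_map hc.measurable (by fun_prop)]
    _ ≤ ∑' i, (∫⁻ p in D i, c p ∂γ + δ * γ.restrict (D i) univ) :=
        ENNReal.tsum_le_tsum fun i => lintegral_le_lintegral_add_of_le_add (hθγ i).2 (hDAB i)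
          (hθγ i).1 (hosc i)
    _ = ∫⁻ p, c p ∂γ + δ * γ univ := by
        rw [ENNReal.tsum_add, ENNReal.tsum_mul_left, ← lintegral_sum_measure,
          ← Measure.sum_apply _ .univ, hsum]
    _ ≤ ∫⁻ p, c p ∂γ + ε := by gcongr

end Pratelli

section Cone

variable {X : Type*}

lemma Cone.radius_mk_s17 (x : X) (r : ℝ≥0) : Cone.radius X (Cone.mk X x r) = r := rfl

lemma Cone.basePt_mk_s17 [Nonempty X] (x : X) {r : ℝ≥0} (hr : r ≠ 0) :
    Cone.basePt X (Cone.mk X x r) = x := if_neg hr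

lemma Cone.basePt_of_radius_eq_zero_s17 [Nonempty X] {z : Cone X} (hz : Cone.radius X z = 0) :
    Cone.basePt X z = Classical.arbitrary X := by
  induction z using Quotient.inductionOn with | _ p => exact if_pos hz

lemma Cone.exists_mk_radius_eq (z : Cone X) : ∃ x, Cone.mk X x (Cone.radius X z) = z := by
  induction z using Quotient.inductionOn with | _ p => exact ⟨p.1, rfl⟩

lemma Cone.mk_eq_vertex [Nonempty X] (x : X) : Cone.mk X x 0 = Cone.vertex X :=
  Quotient.sound (Or.inr ⟨rfl, rfl⟩)

lemma Cone.mk_basePt_radius_s17 [Nonempty X] (z : Cone X) :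
    Cone.mk X (Cone.basePt X z) (Cone.radius X z) = z := by
  obtain ⟨x, hx⟩ := Cone.exists_mk_radius_eq z
  generalize Cone.radius X z = r at hx
  subst hx
  rcases eq_or_ne r 0 with rfl | hr
  · rw [Cone.mk_eq_vertex, Cone.mk_eq_vertex]
  · rw [Cone.basePt_mk_s17 x hr]

variable [TopologicalSpace X]

lemma Cone.isOpen_iff_s17 {U : Set (Cone X)} :
    IsOpen U ↔ IsOpen ((fun p : X × ℝ≥0 => Cone.mk X p.1 p.2) ⁻¹' U) ∧
      ∀ x : X, Cone.mk X x 0 ∈ U →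
        ∃ ε : ℝ≥0, 0 < ε ∧ ∀ (y : X) (r : ℝ≥0), r < ε → Cone.mk X y r ∈ U := Iff.rfl

lemma Cone.continuous_mk_s17 : Continuous fun p : X × ℝ≥0 => Cone.mk X p.1 p.2 :=
  ⟨fun _ hU => hU.1⟩

lemma Cone.continuous_radius_s17 : Continuous (Cone.radius X) := by
  refine ⟨fun V hV => Cone.isOpen_iff_s17.2 ⟨hV.preimage continuous_snd, fun x hx => ?_⟩⟩
  obtain ⟨ε, hε, h⟩ := exists_Ico_subset_of_mem_nhds (hV.mem_nhds hx) ⟨1, one_pos⟩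
  exact ⟨ε, hε, fun y r hr => h ⟨zero_le, hr⟩⟩

lemma Cone.nhds_vertex [Nonempty X] : 𝓝 (Cone.vertex X) = comap (Cone.radius X) (𝓝 0) := by
  refine le_antisymm Cone.continuous_radius_s17.continuousAt.le_comap fun U hU => ?_
  obtain ⟨V, hVU, hV, hoV⟩ := mem_nhds_iff.1 hU
  obtain ⟨ε, hε, hεV⟩ := (Cone.isOpen_iff_s17.1 hV).2 _ hoV
  refine ⟨Iio ε, Iio_mem_nhds hε, fun z hz => hVU ?_⟩
  obtain ⟨x, hx⟩ := Cone.exists_mk_radius_eq z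
  exact hx ▸ hεV x _ hz

lemma Cone.isOpen_radius_ne_zero_basePt_mem [Nonempty X] {U : Set X} (hU : IsOpen U) :
    IsOpen {z : Cone X | Cone.radius X z ≠ 0 ∧ Cone.basePt X z ∈ U} := by
  refine Cone.isOpen_iff_s17.2 ⟨?_, fun x hx => absurd rfl hx.1⟩
  convert ((isOpen_ne (x := (0 : ℝ≥0))).prod hU).preimage continuous_swap using 1
  ext ⟨x, r⟩
  exact and_congr_right fun hr => iff_of_eq (congrArg (· ∈ U) (Cone.basePt_mk_s17 x hr))

lemma Cone.measurable_basePt_s17 [Nonempty X] [MeasurableSpace X] [BorelSpace X] :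
    Measurable (Cone.basePt X) := by
  refine measurable_of_isOpen fun U hU => ?_
  have hvertex : MeasurableSet {z : Cone X | Cone.radius X z = 0 ∧ Classical.arbitrary X ∈ U} :=
    .inter (isClosed_eq Cone.continuous_radius_s17 continuous_const).measurableSet (.const _)
  convert (Cone.isOpen_radius_ne_zero_basePt_mem hU).measurableSet.union hvertex using 1
  ext z
  by_cases hz : Cone.radius X z = 0 <;> simp [hz, Cone.basePt_of_radius_eq_zero_s17]

end Cone

section RadialMarginal

variable {X : Type*} [MeasurableSpace X]

/-- The homogeneous marginal of order `1` of a measure on the cone over `X`, in the polar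
coordinates `(x, r) ∈ X × ℝ≥0`: the measure `x_♯ (r · η)`. -/
def radialMarginal (η : Measure (X × ℝ≥0)) : Measure X :=
  (η.withDensity fun p => p.2).map Prod.fst

variable {Ω : Type*} [MeasurableSpace Ω]

lemma lintegral_radialMarginal (η : Measure (X × ℝ≥0)) {f : X → ℝ≥0∞} (hf : Measurable f) :
    ∫⁻ x, f x ∂radialMarginal η = ∫⁻ p, p.2 * f p.1 ∂η := by
  rw [radialMarginal, lintegral_map hf measurable_fst,
    lintegral_withDensity_eq_lintegral_mul _ (by fun_prop) (by fun_prop)]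
  rfl

lemma radialMarginal_univ (η : Measure (X × ℝ≥0)) :
    radialMarginal η univ = ∫⁻ p, p.2 ∂η := by
  simpa using lintegral_radialMarginal η (measurable_const (a := 1))

lemma radialMarginal_add (η η' : Measure (X × ℝ≥0)) :
    radialMarginal (η + η') = radialMarginal η + radialMarginal η' := by
  simp only [radialMarginal, withDensity_add_measure, Measure.map_add _ _ measurable_fst]

lemma radialMarginal_map (β : Measure Ω) {x : Ω → X} {r : Ω → ℝ≥0} (hx : Measurable x)
    (hr : Measurable r) :
    radialMarginal (β.map fun ω => (x ω, r ω)) = (β.withDensity fun ω => r ω).map x := by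
  refine Measure.ext_of_lintegral _ fun f hf => ?_
  rw [lintegral_radialMarginal _ hf, lintegral_map (by fun_prop) (by fun_prop),
    lintegral_map hf hx, lintegral_withDensity_eq_lintegral_mul _ (by fun_prop) (by fun_prop)]
  rfl

end RadialMarginal

section Redistribution

lemma lintegral_map_le_lintegral_add {Ω Ω' : Type*} [MeasurableSpace Ω] [MeasurableSpace Ω']
    {μ : Measure Ω} {f : Ω → Ω'} {c : Ω' → ℝ≥0∞} {c' : Ω → ℝ≥0∞} {ε : ℝ≥0∞}
    (h : ∀ᵐ ω ∂μ, c (f ω) ≤ c' ω + ε) :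
    ∫⁻ ω, c ω ∂μ.map f ≤ ∫⁻ ω, c' ω ∂μ + ε * μ univ :=
  calc _ ≤ ∫⁻ ω, c (f ω) ∂μ := lintegral_map_le c f
    _ ≤ ∫⁻ ω, (c' ω + ε) ∂μ := lintegral_mono_ae h
    _ = _ := by rw [lintegral_add_right _ measurable_const, lintegral_const]

lemma lintegral_le_lintegral_map_add {Ω Ω' : Type*} [MeasurableSpace Ω] [MeasurableSpace Ω']
    {μ : Measure Ω} {f : Ω → Ω'} (hf : Measurable f) {c : Ω → ℝ≥0∞} {c' : Ω' → ℝ≥0∞}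
    (hc' : Measurable c') {ε : ℝ≥0∞} (h : ∀ᵐ ω ∂μ, c ω ≤ c' (f ω) + ε) :
    ∫⁻ ω, c ω ∂μ ≤ ∫⁻ ω, c' ω ∂μ.map f + ε * μ.map f univ :=
  calc _ ≤ ∫⁻ ω, (c' (f ω) + ε) ∂μ := lintegral_mono_ae h
    _ = ∫⁻ ω, (c' ω + ε) ∂μ.map f := (lintegral_map (hc'.add_const ε) hf).symm
    _ = _ := by rw [lintegral_add_right _ measurable_const, lintegral_const]

lemma exists_nnreal_mul_eq_mul {A B : ℝ≥0∞} (hA : A ≠ 0) (hA' : A ≠ ⊤) (hB : B ≠ 0) (hB' : B ≠ ⊤) :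
    ∃ s κ : ℝ≥0, s < 1 ∧ κ ≠ 0 ∧ κ ≤ 1 ∧ s * A = κ * B := by
  lift A to ℝ≥0 using hA'
  lift B to ℝ≥0 using hB'
  rw [ENNReal.coe_ne_zero] at hA hB
  refine ⟨B / (A + B), A / (A + B), ?_, by positivity, ?_, ?_⟩
  · rw [div_lt_one (by positivity)]
    exact lt_add_of_pos_left _ (pos_iff_ne_zero.2 hA)
  · exact div_le_one_of_le₀ le_self_add zero_le
  · norm_cast
    ring

lemma lintegral_ne_zero_of_ae_ne_zero {Ω : Type*} [MeasurableSpace Ω] {μ : Measure Ω} (hμ : μ ≠ 0)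
    {f : Ω → ℝ≥0∞} (hf : Measurable f) (hf0 : ∀ᵐ ω ∂μ, f ω ≠ 0) : ∫⁻ ω, f ω ∂μ ≠ 0 := by
  intro h
  refine hμ (ae_eq_bot.1 (eventually_false_iff_eq_bot.1 ?_))
  filter_upwards [hf0, (lintegral_eq_zero_iff hf).1 h] with ω h0 h1 using h0 h1

variable {X Q : Type*} [MeasurableSpace X] [MeasurableSpace Q] {t : (X × ℝ≥0) × Q → ℝ≥0}

/-- The map `((x, r), q) ↦ ((x, (1 - t) r), q)`, where the fraction `t` of the radius that is given
up may depend on `((x, r), q)`. -/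
def lowerRadius (t : (X × ℝ≥0) × Q → ℝ≥0) (p : (X × ℝ≥0) × Q) : (X × ℝ≥0) × Q :=
  ((p.1.1, (1 - t p) * p.1.2), p.2)

lemma measurable_lowerRadius (ht : Measurable t) : Measurable (lowerRadius t) := by
  unfold lowerRadius
  fun_prop

lemma snd_map_lowerRadius (ht : Measurable t) (β : Measure ((X × ℝ≥0) × Q)) :
    (β.map (lowerRadius t)).snd = β.snd :=
  Measure.map_map measurable_snd (measurable_lowerRadius ht)

lemma radialMarginal_map_lowerRadius_add (ht : Measurable t) (ht1 : ∀ p, t p ≤ 1)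
    (β : Measure ((X × ℝ≥0) × Q)) :
    radialMarginal (β.map (lowerRadius t)).fst +
      (β.withDensity fun p => (t p * p.1.2 : ℝ≥0)).map (fun p => p.1.1) =
        radialMarginal β.fst := by
  have hlow : radialMarginal (β.map (lowerRadius t)).fst =
      (β.withDensity fun p => ((1 - t p) * p.1.2 : ℝ≥0)).map fun p => p.1.1 := by
    rw [Measure.fst, Measure.map_map measurable_fst (measurable_lowerRadius ht)]
    exact radialMarginal_map β (by fun_prop) (by fun_prop)
  have hfst : radialMarginal β.fst = (β.withDensity fun p => p.1.2).map fun p => p.1.1 :=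
    radialMarginal_map β measurable_fst.fst measurable_fst.snd
  rw [hlow, hfst, ← Measure.map_add _ _ (by fun_prop), ← withDensity_add_left (by fun_prop)]
  congr 2
  ext p
  rw [Pi.add_apply, ← ENNReal.coe_add, ← add_mul, tsub_add_cancel_of_le (ht1 p), one_mul]

lemma exists_measure_radialMarginal_fst_eq (η : Measure X) [IsFiniteMeasure η] (hη : η ≠ 0)
    (σ : Measure Q) [SFinite σ] {b : Q → ℝ≥0}
    (hb : Measurable b) (hησ : ∫⁻ q, b q ∂σ = η univ) :
    ∃ β : Measure ((X × ℝ≥0) × Q), radialMarginal β.fst = η ∧ β.snd = σ ∧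
      ∀ᵐ p ∂β, p.1.2 = b p.2 := by
  have hη0 : η univ ≠ 0 := by simpa using hη
  have hinv : (η univ)⁻¹ * η univ = 1 := ENNReal.inv_mul_cancel hη0 (measure_ne_top _ _)
  have hlift : Measurable fun p : X × Q => ((p.1, b p.2), p.2) := by fun_prop
  refine ⟨(((η univ)⁻¹ • η).prod σ).map fun p => ((p.1, b p.2), p.2), ?_, ?_, ?_⟩
  · rw [Measure.fst, Measure.map_map measurable_fst hlift]
    refine (radialMarginal_map _ measurable_fst (hb.comp measurable_snd)).trans ?_
    simp only [Function.comp_apply]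
    rw [← prod_withDensity_right hb.coe_nnreal_ennreal, Measure.map_fst_prod,
      withDensity_apply _ .univ, setLIntegral_univ, hησ, smul_smul, mul_comm, hinv, one_smul]
  · rw [Measure.snd, Measure.map_map measurable_snd hlift]
    refine Measure.map_snd_prod.trans ?_
    rw [Measure.smul_apply, smul_eq_mul, hinv, one_smul]
  · exact (ae_map_iff hlift.aemeasurable (measurableSet_eq_fun (by fun_prop) (by fun_prop))).2
      (.of_forall fun _ => rfl)

lemma radialMarginal_fst_eq_zero {β : Measure ((X × ℝ≥0) × Q)} (hβ : ∀ᵐ p ∂β, p.1.2 = 0) :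
    radialMarginal β.fst = 0 := by
  rw [← Measure.measure_univ_eq_zero, radialMarginal_univ, Measure.fst,
    lintegral_map (by fun_prop) measurable_fst]
  exact lintegral_eq_zero_of_ae_eq_zero (hβ.mono fun p hp => by simp [hp])

lemma ae_map_lowerRadius_ne_zero (ht : Measurable t) (ht1 : ∀ p, t p < 1)
    {β : Measure ((X × ℝ≥0) × Q)} (hβ : ∀ᵐ p ∂β, p.1.2 ≠ 0) :
    ∀ᵐ p ∂β.map (lowerRadius t), p.1.2 ≠ 0 :=
  (ae_map_iff (measurable_lowerRadius ht).aemeasurable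
    (measurableSet_eq_fun (by fun_prop) (by fun_prop)).compl).2
      (hβ.mono fun p hp => mul_ne_zero (tsub_pos_of_lt (ht1 p)).ne' hp)

lemma exists_radialMarginal_lowerRadius_add_eq {β : Measure ((X × ℝ≥0) × Q)} (hβ0 : β ≠ 0)
    (hβ : ∀ᵐ p ∂β, p.1.2 ≠ 0) [IsFiniteMeasure (radialMarginal β.fst)] {σ : Measure Q}
    [IsFiniteMeasure σ] (hσ : σ ≠ 0) {a : (X × ℝ≥0) × Q → ℝ≥0} (ha : Measurable a)
    (ha0 : ∀ p, a p ≠ 0) (ha1 : ∀ p, a p ≤ 1) {b : Q → ℝ≥0} (hb : Measurable b)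
    (hb0 : ∀ q, b q ≠ 0) (hb1 : ∀ q, b q ≤ 1) :
    ∃ (t : (X × ℝ≥0) × Q → ℝ≥0) (ρ : Measure ((X × ℝ≥0) × Q)), Measurable t ∧ (∀ p, t p < 1) ∧
      (∀ p, t p ≤ a p) ∧ (∀ᵐ p ∂ρ, p.1.2 ≠ 0 ∧ p.1.2 ≤ b p.2) ∧ ρ.snd = σ ∧
      radialMarginal (β.map (lowerRadius t)).fst + radialMarginal ρ.fst = radialMarginal β.fst := by
  have hA0 : ∫⁻ p, (a p * p.1.2 : ℝ≥0) ∂β ≠ 0 :=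
    lintegral_ne_zero_of_ae_ne_zero hβ0 (by fun_prop) (hβ.mono fun p hp => by simp [ha0 p, hp])
  have hA : ∫⁻ p, (a p * p.1.2 : ℝ≥0) ∂β ≠ ⊤ := by
    have hr : ∫⁻ p, p.1.2 ∂β = radialMarginal β.fst univ := by
      rw [radialMarginal_univ, Measure.fst, lintegral_map (by fun_prop) measurable_fst]
    refine ne_top_of_le_ne_top (hr ▸ measure_ne_top (radialMarginal β.fst) univ)
      (lintegral_mono fun p => ?_)
    exact ENNReal.coe_le_coe.2 (mul_le_of_le_one_left zero_le (ha1 p))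
  have hB0 : ∫⁻ q, b q ∂σ ≠ 0 :=
    lintegral_ne_zero_of_ae_ne_zero hσ (by fun_prop) (.of_forall fun q => by simp [hb0 q])
  have hB : ∫⁻ q, b q ∂σ ≠ ⊤ := by
    refine ne_top_of_le_ne_top (measure_ne_top σ univ) (lintegral_one (μ := σ) ▸ ?_)
    exact lintegral_mono fun q => ENNReal.coe_le_one_iff.2 (hb1 q)
  obtain ⟨s, κ, hs, hκ0, hκ, hsκ⟩ := exists_nnreal_mul_eq_mul hA0 hA hB0 hB
  have hsa : Measurable fun p => s * a p := by fun_prop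
  let η := (β.withDensity fun p => (s * a p * p.1.2 : ℝ≥0)).map fun p => p.1.1
  have hη : η univ = κ * ∫⁻ q, b q ∂σ := by
    rw [Measure.map_apply (by fun_prop) .univ, preimage_univ, withDensity_apply _ .univ,
      setLIntegral_univ, ← hsκ, ← lintegral_const_mul _ (by fun_prop)]
    simp only [mul_assoc, ENNReal.coe_mul]
  have hη0 : η ≠ 0 := fun h => by simp [h, hκ0, hB0] at hη
  have : IsFiniteMeasure η := ⟨by rw [hη]; finiteness⟩
  obtain ⟨ρ, hρ₁, hρ₂, hρ⟩ := exists_measure_radialMarginal_fst_eq η hη0 σ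
    (b := fun q => κ * b q) (by fun_prop)
    (by simp only [ENNReal.coe_mul, lintegral_const_mul _ hb.coe_nnreal_ennreal, hη])
  refine ⟨fun p => s * a p, ρ, hsa, fun p => mul_lt_one_of_lt_of_le hs (ha1 p),
    fun p => mul_le_of_le_one_left zero_le hs.le, hρ.mono fun p hp => ?_, hρ₂, hρ₁.symm ▸ ?_⟩
  · exact hp ▸ ⟨mul_ne_zero hκ0 (hb0 _), mul_le_of_le_one_left zero_le hκ⟩
  · exact radialMarginal_map_lowerRadius_add hsa (fun p => mul_le_one' hs.le (ha1 p)) β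

end Redistribution

section VertexRemoval

lemma eventually_le_add {ι : Type*} {l : Filter ι} {u : ι → ℝ≥0∞} {a ε : ℝ≥0∞}
    (hu : Tendsto u l (𝓝 a)) (hε : ε ≠ 0) : ∀ᶠ i in l, u i ≤ a + ε := by
  rcases eq_or_ne a ⊤ with rfl | ha
  · simp
  · exact hu.eventually_le_const (ENNReal.lt_add_right ha hε)

lemma exists_measurable_modulus {ι P : Type*} [TopologicalSpace P] [MeasurableSpace P]
    [OpensMeasurableSpace P] {F : ι → P → ℝ≥0∞} {f : P → ℝ≥0∞} (hF : ∀ t, Continuous (F t))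
    (hf : Continuous f) {r : ι → ℝ≥0} {ε : ℝ≥0∞}
    (h : ∀ p, ∀ᶠ t in comap r (𝓝 0), F t p ≤ f p + ε) :
    ∃ b : P → ℝ≥0, Measurable b ∧ (∀ p, b p ≠ 0) ∧ (∀ p, b p ≤ 1) ∧
      ∀ p t, r t ≤ b p → F t p ≤ f p + ε := by
  classical
  let C (n : ℕ) : Set P := {p | ∀ t, r t ≤ 1 / (n + 1) → F t p ≤ f p + ε}
  have hC (n : ℕ) : IsClosed (C n) := by
    simp only [C, ofPred_forall]
    exact isClosed_iInter fun t => isClosed_iInter fun _ =>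
      isClosed_le (hF t) (hf.add continuous_const)
  have hex (p : P) : ∃ n, p ∈ C n := by
    obtain ⟨V, hV, hVF⟩ := h p
    obtain ⟨δ, hδ, hδV⟩ := exists_Ico_subset_of_mem_nhds hV ⟨1, one_pos⟩
    obtain ⟨n, hn⟩ := exists_nat_one_div_lt hδ
    exact ⟨n, fun t ht => hVF (hδV ⟨zero_le, ht.trans_lt hn⟩)⟩
  refine ⟨fun p => 1 / (Nat.find (hex p) + 1), ?_, fun p => by positivity, fun p => ?_,
    fun p => Nat.find_spec (hex p)⟩
  · exact (measurable_of_countable fun n : ℕ => (1 / (n + 1) : ℝ≥0)).comp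
      (measurable_find hex fun n => (hC n).measurableSet)
  · exact div_le_one_of_le₀ le_add_self zero_le

variable {X Q : Type*} [TopologicalSpace X] [TopologicalSpace Q] {H : Cone X × Q → ℝ≥0∞}

lemma exists_radius_lowering [MeasurableSpace ((X × ℝ≥0) × Q)]
    [OpensMeasurableSpace ((X × ℝ≥0) × Q)] (hH : Continuous H) {ε : ℝ≥0∞} (hε : ε ≠ 0) :
    ∃ a : (X × ℝ≥0) × Q → ℝ≥0, Measurable a ∧ (∀ p, a p ≠ 0) ∧ (∀ p, a p ≤ 1) ∧
      ∀ p, ∀ t ≤ a p, H (Cone.mk X p.1.1 ((1 - t) * p.1.2), p.2) ≤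
        H (Cone.mk X p.1.1 p.1.2, p.2) + ε := by
  have hmk := Cone.continuous_mk_s17 (X := X)
  refine exists_measurable_modulus (r := id) (ε := ε)
    (F := fun t p => H (Cone.mk X p.1.1 ((1 - t) * p.1.2), p.2))
    (fun t => hH.comp ((hmk.comp (by fun_prop : Continuous fun p : (X × ℝ≥0) × Q =>
      (p.1.1, (1 - t) * p.1.2))).prodMk continuous_snd))
    (hH.comp ((hmk.comp continuous_fst).prodMk continuous_snd)) fun p => ?_
  have hlim : Continuous fun t : ℝ≥0 => H (Cone.mk X p.1.1 ((1 - t) * p.1.2), p.2) :=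
    hH.comp ((hmk.comp (by fun_prop : Continuous fun t : ℝ≥0 =>
      (p.1.1, (1 - t) * p.1.2))).prodMk continuous_const)
  rw [comap_id]
  exact eventually_le_add (hlim.tendsto' 0 _ (by simp)) hε

lemma exists_vertex_raising [Nonempty X] [MeasurableSpace Q] [OpensMeasurableSpace Q]
    (hH : Continuous H) {ε : ℝ≥0∞} (hε : ε ≠ 0) :
    ∃ b : Q → ℝ≥0, Measurable b ∧ (∀ q, b q ≠ 0) ∧ (∀ q, b q ≤ 1) ∧
      ∀ q z, Cone.radius X z ≤ b q → H (z, q) ≤ H (Cone.vertex X, q) + ε := by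
  refine exists_measurable_modulus (F := fun z q => H (z, q)) (fun z => hH.comp (by fun_prop))
    (hH.comp (by fun_prop)) fun q => ?_
  rw [← Cone.nhds_vertex]
  exact eventually_le_add (hH.comp (by fun_prop : Continuous fun z => (z, q))).continuousAt hε

lemma continuous_vertex_left [Nonempty X] (hH : Continuous H) :
    Continuous fun q => H (Cone.vertex X, q) :=
  hH.comp (by fun_prop : Continuous fun q => (Cone.vertex X, q))

variable [MeasurableSpace X] [MeasurableSpace Q] [OpensMeasurableSpace Q]

lemma lintegral_vertex_snd [Nonempty X] (hH : Continuous H) {β : Measure ((X × ℝ≥0) × Q)}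
    (hβ : ∀ᵐ p ∂β, p.1.2 = 0) :
    ∫⁻ q, H (Cone.vertex X, q) ∂β.snd = ∫⁻ p, H (Cone.mk X p.1.1 p.1.2, p.2) ∂β := by
  rw [Measure.snd, lintegral_map (continuous_vertex_left hH).measurable measurable_snd]
  exact lintegral_congr_ae (hβ.mono fun p hp => by simp only [hp, Cone.mk_eq_vertex])

variable [OpensMeasurableSpace X] [SecondCountableTopology X]

lemma exists_radius_ne_zero_of_add_vertex_mass [Nonempty X] (hH : Continuous H)
    {β : Measure ((X × ℝ≥0) × Q)} (hβ0 : β ≠ 0) (hβ : ∀ᵐ p ∂β, p.1.2 ≠ 0)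
    [IsFiniteMeasure (radialMarginal β.fst)] {σ : Measure Q} [IsFiniteMeasure σ] (hσ : σ ≠ 0)
    {ε : ℝ≥0∞} (hε : ε ≠ 0) :
    ∃ β' : Measure ((X × ℝ≥0) × Q), (∀ᵐ p ∂β', p.1.2 ≠ 0) ∧
      radialMarginal β'.fst = radialMarginal β.fst ∧ β'.snd = β.snd + σ ∧
      ∫⁻ p, H (Cone.mk X p.1.1 p.1.2, p.2) ∂β' ≤
        ∫⁻ p, H (Cone.mk X p.1.1 p.1.2, p.2) ∂β + ε * β univ +
          (∫⁻ q, H (Cone.vertex X, q) ∂σ + ε * σ univ) := by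
  obtain ⟨a, ha, ha0, ha1, haH⟩ := exists_radius_lowering hH hε
  obtain ⟨b, hb, hb0, hb1, hbH⟩ := exists_vertex_raising hH hε
  obtain ⟨t, ρ, ht, ht1, hta, hρ, hρ₂, hρ₁⟩ :=
    exists_radialMarginal_lowerRadius_add_eq hβ0 hβ hσ ha ha0 ha1 hb hb0 hb1
  refine ⟨β.map (lowerRadius t) + ρ, ?_, ?_, ?_, ?_⟩
  · exact ae_add_measure_iff.2 ⟨ae_map_lowerRadius_ne_zero ht ht1 hβ, hρ.mono fun p hp => hp.1⟩
  · rw [Measure.fst_add, radialMarginal_add, hρ₁]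
  · rw [Measure.snd_add, snd_map_lowerRadius ht, hρ₂]
  · rw [lintegral_add_measure]
    refine add_le_add (lintegral_map_le_lintegral_add (.of_forall fun p => haH p _ (hta p)))
      (hρ₂ ▸ lintegral_le_lintegral_map_add measurable_snd
        (continuous_vertex_left hH).measurable ?_)
    exact hρ.mono fun p hp => hbH p.2 (Cone.mk X p.1.1 p.1.2) hp.2

lemma exists_radius_ne_zero_lintegral_le_add [Nonempty X] (hH : Continuous H)
    (β : Measure ((X × ℝ≥0) × Q)) [IsFiniteMeasure β] [IsFiniteMeasure (radialMarginal β.fst)]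
    (hβ : radialMarginal β.fst ≠ 0) {ε : ℝ≥0∞} (hε : ε ≠ 0) :
    ∃ β' : Measure ((X × ℝ≥0) × Q), (∀ᵐ p ∂β', p.1.2 ≠ 0) ∧
      radialMarginal β'.fst = radialMarginal β.fst ∧ β'.snd = β.snd ∧
      ∫⁻ p, H (Cone.mk X p.1.1 p.1.2, p.2) ∂β' ≤
        ∫⁻ p, H (Cone.mk X p.1.1 p.1.2, p.2) ∂β + ε := by
  let V : Set ((X × ℝ≥0) × Q) := {p | p.1.2 = 0}
  have hV : MeasurableSet V := measurableSet_eq_fun (by fun_prop) (by fun_prop)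
  set β₀ := β.restrict V
  set β₁ := β.restrict Vᶜ
  have hadd : β₁ + β₀ = β := Measure.restrict_compl_add_restrict hV
  have hβ₀ : ∀ᵐ p ∂β₀, p.1.2 = 0 := ae_restrict_mem hV
  have hβ₁ : ∀ᵐ p ∂β₁, p.1.2 ≠ 0 := ae_restrict_mem hV.compl
  have hmarg : radialMarginal β₁.fst = radialMarginal β.fst := by
    rw [← hadd, Measure.fst_add, radialMarginal_add, radialMarginal_fst_eq_zero hβ₀, add_zero]
  have : IsFiniteMeasure (radialMarginal β₁.fst) := hmarg ▸ ‹_›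
  have hβ₁0 : β₁ ≠ 0 := fun h =>
    hβ (hmarg ▸ radialMarginal_fst_eq_zero (by simp [h]))
  rcases eq_or_ne β₀.snd 0 with h0 | h0
  · have hβ₁β : β₁ = β := by
      rw [← hadd, (Measure.map_eq_zero_iff measurable_snd.aemeasurable).1 h0, add_zero]
    exact ⟨β₁, hβ₁, hmarg, by rw [hβ₁β], hβ₁β ▸ le_self_add⟩
  obtain ⟨δ, hδ0, hδ⟩ := ENNReal.exists_nnreal_pos_mul_lt (measure_ne_top β univ) hε
  obtain ⟨β', hβ', hβ'₁, hβ'₂, hle⟩ := exists_radius_ne_zero_of_add_vertex_mass hH hβ₁0 hβ₁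
    (σ := β₀.snd) h0 (ε := δ) (by exact_mod_cast hδ0.ne')
  refine ⟨β', hβ', hβ'₁.trans hmarg, ?_, hle.trans ?_⟩
  · rw [hβ'₂, ← Measure.snd_add, hadd]
  · rw [lintegral_vertex_snd hH hβ₀, Measure.snd_univ, add_add_add_comm,
      ← lintegral_add_measure, ← mul_add, ← Measure.add_apply, hadd]
    gcongr

end VertexRemoval

section PolarCoordinates

variable {X : Type*} [Nonempty X]

/-- Polar coordinates on the cone: a right inverse of `(x, r) ↦ [x, r]`, the base point of the
vertex being arbitrary. -/
def Cone.polar (z : Cone X) : X × ℝ≥0 := (Cone.basePt X z, Cone.radius X z)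

variable [TopologicalSpace X] [MeasurableSpace X] [BorelSpace X]

lemma Cone.measurable_polar : Measurable (Cone.polar (X := X)) :=
  Cone.measurable_basePt_s17.prodMk Cone.continuous_radius_s17.measurable

lemma radialMarginal_map_polar {Ω : Type*} [MeasurableSpace Ω] (β : Measure Ω) {z : Ω → Cone X}
    (hz : Measurable z) :
    radialMarginal (β.map fun ω => (z ω).polar) =
      (β.withDensity fun ω => Cone.radius X (z ω)).map fun ω => Cone.basePt X (z ω) :=
  radialMarginal_map β (Cone.measurable_basePt_s17.comp hz) (Cone.continuous_radius_s17.measurable.comp hz)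

lemma radialMarginal_map_polar_mk (η : Measure (X × ℝ≥0)) :
    radialMarginal (η.map (Cone.polar ∘ fun p => Cone.mk X p.1 p.2)) = radialMarginal η := by
  refine Measure.ext_of_lintegral _ fun f hf => ?_
  rw [lintegral_radialMarginal _ hf, lintegral_radialMarginal _ hf, lintegral_map (by fun_prop)
    (Cone.measurable_polar.comp Cone.continuous_mk_s17.measurable)]
  refine lintegral_congr fun p => ?_
  rcases eq_or_ne p.2 0 with h | h
  · simp [Cone.polar, Cone.radius_mk_s17, h]
  · simp only [Function.comp_apply, Cone.polar, Cone.radius_mk_s17, Cone.basePt_mk_s17 _ h]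

end PolarCoordinates

section HomCoupling

variable {X₁ X₂ : Type*}

/-- The quotient map `((x₁, r₁), (x₂, r₂)) ↦ ([x₁, r₁], [x₂, r₂])` onto the product cone. -/
def coneProdMk (p : (X₁ × ℝ≥0) × (X₂ × ℝ≥0)) : Cone X₁ × Cone X₂ :=
  (Cone.mk X₁ p.1.1 p.1.2, Cone.mk X₂ p.2.1 p.2.2)

variable {H : Cone X₁ × Cone X₂ → ℝ≥0∞}

lemma RadiallyHomogeneous.mul_apply_coneProdMk_div (hhom : RadiallyHomogeneous H) (x : X₁) (y : X₂)
    {r : ℝ≥0} (s : ℝ≥0) (hr : r ≠ 0) :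
    r * H (coneProdMk ((x, 1), (y, s / r))) = H (coneProdMk ((x, r), (y, s))) := by
  simpa [mul_div_cancel₀ _ hr, coneProdMk] using (hhom x y 1 (s / r) r (pos_iff_ne_zero.2 hr)).symm

variable [TopologicalSpace X₁] [TopologicalSpace X₂]

lemma continuous_coneProdMk : Continuous (coneProdMk (X₁ := X₁) (X₂ := X₂)) :=
  Cone.continuous_mk_s17.prodMap Cone.continuous_mk_s17

section Marginals

lemma homMarginalFst_one [MeasurableSpace X₁] [BorelSpace X₁] [Nonempty X₁]
    (α : Measure (Cone X₁ × Cone X₂)) :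
    homMarginalFst 1 α = radialMarginal (α.map (Cone.polar ∘ Prod.fst)) := by
  simp only [homMarginalFst, ENNReal.rpow_one]
  exact (radialMarginal_map_polar α continuous_fst.measurable).symm

lemma homMarginalSnd_one [MeasurableSpace X₂] [BorelSpace X₂] [Nonempty X₂]
    (α : Measure (Cone X₁ × Cone X₂)) :
    homMarginalSnd 1 α = radialMarginal (α.map (Cone.polar ∘ Prod.snd)) := by
  simp only [homMarginalSnd, ENNReal.rpow_one]
  exact (radialMarginal_map_polar α continuous_snd.measurable).symm

variable [MeasurableSpace X₁] [BorelSpace X₁] [MeasurableSpace X₂] [BorelSpace X₂]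
  [SecondCountableTopology X₂]

lemma homMarginalFst_map_coneProdMk [Nonempty X₁] (β : Measure ((X₁ × ℝ≥0) × (X₂ × ℝ≥0))) :
    homMarginalFst 1 (β.map coneProdMk) = radialMarginal β.fst := by
  rw [homMarginalFst_one, Measure.map_map (Cone.measurable_polar.comp continuous_fst.measurable)
    continuous_coneProdMk.measurable, ← radialMarginal_map_polar_mk β.fst, Measure.fst,
    Measure.map_map (Cone.measurable_polar.comp Cone.continuous_mk_s17.measurable) measurable_fst]
  rfl

lemma homMarginalSnd_map_coneProdMk [Nonempty X₂] (β : Measure ((X₁ × ℝ≥0) × (X₂ × ℝ≥0))) :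
    homMarginalSnd 1 (β.map coneProdMk) = radialMarginal β.snd := by
  rw [homMarginalSnd_one, Measure.map_map (Cone.measurable_polar.comp continuous_snd.measurable)
    continuous_coneProdMk.measurable, ← radialMarginal_map_polar_mk β.snd, Measure.snd,
    Measure.map_map (Cone.measurable_polar.comp Cone.continuous_mk_s17.measurable) measurable_snd]
  rfl

variable [Nonempty X₁] [Nonempty X₂]

lemma exists_map_coneProdMk_eq (α : Measure (Cone X₁ × Cone X₂)) [IsFiniteMeasure α] :
    ∃ β : Measure ((X₁ × ℝ≥0) × (X₂ × ℝ≥0)), IsFiniteMeasure β ∧ β.map coneProdMk = α := by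
  have hpolar : Measurable fun y : Cone X₁ × Cone X₂ => (y.1.polar, y.2.polar) :=
    (Cone.measurable_polar.comp continuous_fst.measurable).prodMk
      (Cone.measurable_polar.comp continuous_snd.measurable)
  refine ⟨α.map fun y => (y.1.polar, y.2.polar), inferInstance, ?_⟩
  rw [Measure.map_map continuous_coneProdMk.measurable hpolar]
  convert Measure.map_id
  exact funext fun y => Prod.ext (Cone.mk_basePt_radius_s17 y.1) (Cone.mk_basePt_radius_s17 y.2)

lemma isHomCoupling_map_coneProdMk (β : Measure ((X₁ × ℝ≥0) × (X₂ × ℝ≥0))) [IsFiniteMeasure β]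
    [IsFiniteMeasure (radialMarginal β.fst)] [IsFiniteMeasure (radialMarginal β.snd)] :
    IsHomCoupling 1 (β.map coneProdMk) (radialMarginal β.fst) (radialMarginal β.snd) := by
  refine ⟨inferInstance, ?_, homMarginalFst_map_coneProdMk β, homMarginalSnd_map_coneProdMk β⟩
  have h₁ : ∫⁻ p, p.1.2 ∂β = radialMarginal β.fst univ := by
    rw [radialMarginal_univ, Measure.fst, lintegral_map (by fun_prop) measurable_fst]
  have h₂ : ∫⁻ p, p.2.2 ∂β = radialMarginal β.snd univ := by
    rw [radialMarginal_univ, Measure.snd, lintegral_map (by fun_prop) measurable_snd]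
  refine ne_top_of_le_ne_top ?_ (lintegral_map_le _ _)
  simp only [ENNReal.rpow_one, coneProdMk, Cone.radius_mk_s17]
  rw [lintegral_add_left (by fun_prop), h₁, h₂]
  finiteness

lemma UH_le_lintegral (H : Cone X₁ × Cone X₂ → ℝ≥0∞) (β : Measure ((X₁ × ℝ≥0) × (X₂ × ℝ≥0)))
    [IsFiniteMeasure β] [IsFiniteMeasure (radialMarginal β.fst)]
    [IsFiniteMeasure (radialMarginal β.snd)] :
    UH H (radialMarginal β.fst) (radialMarginal β.snd) ≤ ∫⁻ p, H (coneProdMk p) ∂β :=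
  (iInf₂_le (β.map coneProdMk) (isHomCoupling_map_coneProdMk β)).trans
    (lintegral_map_le H coneProdMk)

end Marginals

section Plan

variable [MeasurableSpace X₁] [BorelSpace X₁] [MeasurableSpace X₂] [BorelSpace X₂]
  [SecondCountableTopology X₂]

lemma exists_plan_of_radius_ne_zero (hhom : RadiallyHomogeneous H) (hcont : Continuous H)
    {β : Measure ((X₁ × ℝ≥0) × (X₂ × ℝ≥0))} (hβ : ∀ᵐ p ∂β, p.1.2 ≠ 0) :
    ∃ γ : Measure (X₁ × (X₂ × ℝ≥0)), γ.fst = radialMarginal β.fst ∧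
      radialMarginal γ.snd = radialMarginal β.snd ∧
      ∫⁻ p, H (coneProdMk ((p.1, 1), p.2)) ∂γ = ∫⁻ p, H (coneProdMk p) ∂β := by
  let normalize (p : (X₁ × ℝ≥0) × (X₂ × ℝ≥0)) : X₁ × (X₂ × ℝ≥0) :=
    (p.1.1, (p.2.1, p.2.2 / p.1.2))
  have hnorm : Measurable normalize := by fun_prop
  have hdensity : Measurable fun p : (X₁ × ℝ≥0) × (X₂ × ℝ≥0) => (p.1.2 : ℝ≥0∞) := by fun_prop
  refine ⟨(β.withDensity fun p => p.1.2).map normalize, ?_, ?_, ?_⟩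
  · rw [Measure.fst, Measure.map_map measurable_fst hnorm]
    exact (radialMarginal_map β measurable_fst.fst measurable_fst.snd).symm
  · have hsnd : radialMarginal β.snd = (β.withDensity fun p => p.2.2).map fun p => p.2.1 :=
      radialMarginal_map β measurable_snd.fst measurable_snd.snd
    rw [Measure.snd, Measure.map_map measurable_snd hnorm, hsnd]
    refine (radialMarginal_map _ measurable_snd.fst (by fun_prop)).trans ?_
    rw [← withDensity_mul _ hdensity (by fun_prop)]
    refine congrArg (Measure.map _) (withDensity_congr_ae (hβ.mono fun p hp => ?_))
    rw [Pi.mul_apply, ← ENNReal.coe_mul, mul_div_cancel₀ _ hp]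
  · have hc : Measurable fun p : X₁ × (X₂ × ℝ≥0) => H (coneProdMk ((p.1, 1), p.2)) :=
      (hcont.comp (continuous_coneProdMk.comp (by fun_prop))).measurable
    rw [lintegral_map hc hnorm, lintegral_withDensity_eq_lintegral_mul _ hdensity
      (by exact hc.comp hnorm)]
    exact lintegral_congr_ae (hβ.mono fun p hp => hhom.mul_apply_coneProdMk_div _ _ _ hp)

lemma exists_plan_lintegral_le_add [Nonempty X₁] [Nonempty X₂] [SecondCountableTopology X₁]
    (hhom : RadiallyHomogeneous H) (hcont : Continuous H) {μ₁ : Measure X₁} [IsFiniteMeasure μ₁]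
    (hμ₁ : μ₁ ≠ 0) {μ₂ : Measure X₂} {α : Measure (Cone X₁ × Cone X₂)}
    (hα : IsHomCoupling 1 α μ₁ μ₂) {ε : ℝ≥0∞} (hε : ε ≠ 0) :
    ∃ γ : Measure (X₁ × (X₂ × ℝ≥0)), γ.fst = μ₁ ∧ radialMarginal γ.snd = μ₂ ∧
      ∫⁻ p, H (coneProdMk ((p.1, 1), p.2)) ∂γ ≤ ∫⁻ y, H y ∂α + ε := by
  obtain ⟨hfin, -, hα₁, hα₂⟩ := hα
  obtain ⟨β, hβfin, rfl⟩ := exists_map_coneProdMk_eq α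
  rw [homMarginalFst_map_coneProdMk] at hα₁
  rw [homMarginalSnd_map_coneProdMk] at hα₂
  have : IsFiniteMeasure (radialMarginal β.fst) := hα₁ ▸ ‹IsFiniteMeasure μ₁›
  obtain ⟨β', hβ', hβ'₁, hβ'₂, hle⟩ := exists_radius_ne_zero_lintegral_le_add
    (H := fun p : Cone X₁ × (X₂ × ℝ≥0) => H (p.1, Cone.mk X₂ p.2.1 p.2.2))
    (hcont.comp (continuous_id.prodMap Cone.continuous_mk_s17)) β (hα₁ ▸ hμ₁) hε
  obtain ⟨γ, hγ₁, hγ₂, hγ⟩ := exists_plan_of_radius_ne_zero hhom hcont hβ'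
  refine ⟨γ, ?_, ?_, ?_⟩
  · rw [hγ₁, hβ'₁, hα₁]
  · rw [hγ₂, hβ'₂, hα₂]
  · rw [hγ, lintegral_map hcont.measurable continuous_coneProdMk.measurable]
    exact hle

end Plan

section Monge

variable [MeasurableSpace X₁] [BorelSpace X₁] [MeasurableSpace X₂] [BorelSpace X₂]
  [SecondCountableTopology X₂] [Nonempty X₂]

lemma UH_le_lintegral_map [Nonempty X₁] (H : Cone X₁ × Cone X₂ → ℝ≥0∞) (μ₁ : Measure X₁)
    [IsFiniteMeasure μ₁] (μ₂ : Measure X₂) [IsFiniteMeasure μ₂] {T : X₁ → X₂} {g : X₁ → ℝ≥0}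
    (hT : Measurable T) (hg : Measurable g) (hTg : (μ₁.withDensity fun x => g x).map T = μ₂) :
    UH H μ₁ μ₂ ≤ ∫⁻ x, H (coneProdMk ((x, 1), (T x, g x))) ∂μ₁ := by
  have hlift : Measurable fun x => ((x, (1 : ℝ≥0)), (T x, g x)) := by fun_prop
  let β := μ₁.map fun x => ((x, (1 : ℝ≥0)), (T x, g x))
  have hβ₁ : radialMarginal β.fst = μ₁ := by
    rw [Measure.fst, Measure.map_map measurable_fst hlift]
    refine (radialMarginal_map μ₁ measurable_id measurable_const).trans ?_
    simp
  have hβ₂ : radialMarginal β.snd = μ₂ := by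
    rw [Measure.snd, Measure.map_map measurable_snd hlift, ← hTg]
    exact radialMarginal_map μ₁ hT hg
  have : IsFiniteMeasure (radialMarginal β.fst) := hβ₁ ▸ ‹IsFiniteMeasure μ₁›
  have : IsFiniteMeasure (radialMarginal β.snd) := hβ₂ ▸ ‹IsFiniteMeasure μ₂›
  calc UH H μ₁ μ₂ = UH H (radialMarginal β.fst) (radialMarginal β.snd) := by rw [hβ₁, hβ₂]
    _ ≤ ∫⁻ p, H (coneProdMk p) ∂β := UH_le_lintegral H β
    _ ≤ _ := lintegral_map_le _ _

lemma exists_transport_growth_map_lintegral_le_add [SecondCountableTopology X₁]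
    [StandardBorelSpace X₁] [StandardBorelSpace X₂] (hcont : Continuous H)
    (γ : Measure (X₁ × (X₂ × ℝ≥0))) [IsFiniteMeasure γ] [NullSingletonClass γ.fst] {ε : ℝ≥0∞}
    (hε : ε ≠ 0) :
    ∃ (T : X₁ → X₂) (g : X₁ → ℝ≥0), Measurable T ∧ Measurable g ∧
      (γ.fst.withDensity fun x => g x).map T = radialMarginal γ.snd ∧
      ∫⁻ x, H (coneProdMk ((x, 1), (T x, g x))) ∂γ.fst ≤
        ∫⁻ p, H (coneProdMk ((p.1, 1), p.2)) ∂γ + ε := by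
  have hc : Continuous fun p : X₁ × (X₂ × ℝ≥0) => H (coneProdMk ((p.1, 1), p.2)) :=
    hcont.comp (continuous_coneProdMk.comp (by fun_prop))
  obtain ⟨S, hS, hSγ, hle⟩ := exists_measurable_map_eq_snd_lintegral_le hc γ hε
  exact ⟨fun x => (S x).1, fun x => (S x).2, hS.fst, hS.snd,
    hSγ ▸ (radialMarginal_map _ hS.fst hS.snd).symm, hle⟩

end Monge

end HomCoupling

theorem monge_equals_kantorovich_general
    {X₁ X₂ : Type*} [TopologicalSpace X₁] [TopologicalSpace X₂]
    [SecondCountableTopology X₁] [SecondCountableTopology X₂]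
    [MeasurableSpace X₁] [BorelSpace X₁] [MeasurableSpace X₂] [BorelSpace X₂]
    [StandardBorelSpace X₁] [StandardBorelSpace X₂] [Nonempty X₁] [Nonempty X₂]
    {H : Cone X₁ × Cone X₂ → ℝ≥0∞} (hhom : RadiallyHomogeneous H) (hcont : Continuous H)
    (μ₁ : Measure X₁) [IsFiniteMeasure μ₁] [NullSingletonClass μ₁] (hμ₁ : μ₁ ≠ 0)
    (μ₂ : Measure X₂) [IsFiniteMeasure μ₂] :
    UH H μ₁ μ₂ =
      ⨅ (T : X₁ → X₂) (g : X₁ → ℝ≥0)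
        (_ : Measurable T ∧ Measurable g ∧ (μ₁.withDensity fun x => (g x : ℝ≥0∞)).map T = μ₂),
        ∫⁻ x, H (Cone.mk X₁ x 1, Cone.mk X₂ (T x) (g x)) ∂μ₁ := by
  refine le_antisymm (le_iInf fun T => le_iInf₂ fun g h =>
    UH_le_lintegral_map H μ₁ μ₂ h.1 h.2.1 h.2.2) (le_iInf₂ fun α hα => ?_)
  refine ENNReal.le_of_forall_pos_le_add fun ε hε _ => ?_
  have hε2 : (ε / 2 : ℝ≥0∞) ≠ 0 := by simpa using hε.ne'
  obtain ⟨γ, rfl, rfl, hγ⟩ := exists_plan_lintegral_le_add hhom hcont hμ₁ hα hε2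
  have : IsFiniteMeasure γ := ⟨γ.fst_univ ▸ measure_lt_top γ.fst univ⟩
  obtain ⟨T, g, hT, hg, hTg, hle⟩ := exists_transport_growth_map_lintegral_le_add hcont γ hε2
  calc _ ≤ ∫⁻ x, H (coneProdMk ((x, 1), (T x, g x))) ∂γ.fst :=
      iInf_le_of_le T (iInf₂_le g ⟨hT, hg, hTg⟩)
    _ ≤ ∫⁻ p, H (coneProdMk ((p.1, 1), p.2)) ∂γ + ε / 2 := hle
    _ ≤ ∫⁻ y, H y ∂α + ε / 2 + ε / 2 := add_le_add_left hγ _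
    _ = ∫⁻ y, H y ∂α + ε := by rw [add_assoc, ENNReal.add_halves]

/-- Monge = Kantorovich for unbalanced transport with diffuse first
marginal: for Polish `X₁, X₂`, `H` proper, radially `1`-homogeneous and continuous, and
`μᵢ ∈ M₊(Xᵢ)` with `μ₁` atomless and `μ₁(X₁) > 0`,
`U_H(μ₁,μ₂) = inf { ∫ H([x,1],[T(x),g(x)]) dμ₁ : (T,g) Borel, T_♯(g μ₁) = μ₂ }`. -/
theorem monge_equals_kantorovich
    {X₁ X₂ : Type*} [TopologicalSpace X₁] [TopologicalSpace X₂]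
    [PolishSpace X₁] [PolishSpace X₂]
    [MeasurableSpace X₁] [BorelSpace X₁] [MeasurableSpace X₂] [BorelSpace X₂]
    [Nonempty X₁] [Nonempty X₂]
    (H : Cone X₁ × Cone X₂ → ℝ≥0∞) (hproper : ProperCost H)
    (hhom : RadiallyHomogeneous H) (hcont : Continuous H)
    (μ₁ : FiniteMeasure X₁) (μ₂ : FiniteMeasure X₂)
    (hdiffuse : ∀ x : X₁, (μ₁ : Measure X₁) {x} = 0) (hpos : μ₁ ≠ 0) :
    UH H (μ₁ : Measure X₁) (μ₂ : Measure X₂) =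
      ⨅ (T : X₁ → X₂) (g : X₁ → ℝ≥0)
        (_ : Measurable T ∧ Measurable g ∧
          Measure.map T ((μ₁ : Measure X₁).withDensity fun x => (g x : ℝ≥0∞)) =
            (μ₂ : Measure X₂)),
        ∫⁻ x, H (Cone.mk X₁ x 1, Cone.mk X₂ (T x) (g x)) ∂(μ₁ : Measure X₁) := by
  have : NullSingletonClass (μ₁ : Measure X₁) := ⟨hdiffuse⟩
  exact monge_equals_kantorovich_general hhom hcont μ₁ (fun h => hpos (Subtype.ext h)) μ₂

end UOT
end
end
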